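/- Let Q be a privacy protocol all of whose entries are positive and whose rank is a, and let μ be a Borel probability measure on the simplex 𝒫 having a continuous density f. Then liminf_{n→∞} MSE^freq_{μ,n}(Q,Φ_opt,n) / ( (a/(2πe·n²)) · e^{(2/(a−1))·H_n(F|Y⃗)} ) ≥ 1. -/

import Mathlib

/-!
The ratio is bounded below by comparing the entropy with the mean squared error from above, and by
showing that the entropy tends to infinity, so that the additive error of that comparison does not
matter.

*Upper bound.* The frequencies are determined by the counts of all letters but one. Gibbs'
inequality against a product of discretised Gaussians centred at the posterior means bounds the
conditional entropy of these counts. On a unit cell `(t - c) ^ 2` has mean `(k - c) ^ 2 + 1 / 12`,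
so replacing Gaussian sums by integrals only shifts the variance by `1 / 12`. Leaving out the letter
with the largest error, one gets `exp (2 H / (a - 1)) ≤ 2 π e (n ^ 2 MSE / a + 1 / 12)`.

*Lower bound.* Fix `p` and the observations. The counts are then a sum of independent variables, and
since the entries of `Q` are bounded below, their characteristic function is dominated by a Gaussian
with variances of order `n * p x`. Fourier inversion on the torus bounds the probability of every
single value by a multiple of `∏ x ≠ c, (1 + n * p x) ^ (-1 / 2)` for any letter `c` of probability
at least `1 / a`. Integrated against a bounded density this is `O(n ^ (-(a - 1) / 2))`, even though
the bound degenerates at the boundary of the simplex, and hence `exp (2 H / (a - 1)) ≥ c * n`.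

A real `liminf` is only meaningful if the ratio is bounded. This follows from `MSE = O(1 / n)`,
which holds for the unbiased estimator built from a left inverse of `Q` and a fortiori for the
posterior mean.
-/

open MeasureTheory Matrix Finset Filter Real

noncomputable section

/-- The probability simplex in `ℝ^a`. -/
def simplex (a : ℕ) : Set (Fin a → ℝ) :=
  {p | (∀ x, 0 ≤ p x) ∧ ∑ x, p x = 1}

/-- Likelihood `L_y(p) = ∏ i, (Qp)_{y i}`. -/
def lik {a b n : ℕ} (Q : Matrix (Fin b) (Fin a) ℝ) (y : Fin n → Fin b)
    (p : Fin a → ℝ) : ℝ :=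
  ∏ i, Q.mulVec p (y i)

/-- Mean squared error for distribution estimation. -/
def MSEdistr {a b n : ℕ} (Q : Matrix (Fin b) (Fin a) ℝ) (μ : Measure (Fin a → ℝ))
    (Est : (Fin n → Fin b) → (Fin a → ℝ)) : ℝ :=
  ∑ y : (Fin n → Fin b), ∫ p, (∑ x, (p x - Est y x) ^ 2) * lik Q y p ∂μ

/-- The posterior-mean estimator for distribution estimation. -/
def PiOpt {a b n : ℕ} (Q : Matrix (Fin b) (Fin a) ℝ) (μ : Measure (Fin a → ℝ))
    (y : Fin n → Fin b) : Fin a → ℝ :=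
  fun x => (∫ p, p x * lik Q y p ∂μ) / (∫ p, lik Q y p ∂μ)

/-- Empirical frequency vector of a data vector. -/
def freqVec {a n : ℕ} (xv : Fin n → Fin a) : Fin a → ℝ :=
  fun α => ((Finset.univ.filter fun i => xv i = α).card : ℝ) / n

/-- Joint weight `w(x⃗,y⃗) = ∫ ∏ i, p_{x_i} Q_{y_i|x_i} dμ(p)`. -/
def wgt {a b n : ℕ} (Q : Matrix (Fin b) (Fin a) ℝ) (μ : Measure (Fin a → ℝ))
    (xv : Fin n → Fin a) (y : Fin n → Fin b) : ℝ :=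
  ∫ p, (∏ i, p (xv i) * Q (y i) (xv i)) ∂μ

/-- Mean squared error for frequency estimation. -/
def MSEfreq {a b n : ℕ} (Q : Matrix (Fin b) (Fin a) ℝ) (μ : Measure (Fin a → ℝ))
    (Est : (Fin n → Fin b) → (Fin a → ℝ)) : ℝ :=
  ∑ xv : (Fin n → Fin a), ∑ y : (Fin n → Fin b),
    wgt Q μ xv y * ∑ α, (freqVec xv α - Est y α) ^ 2

/-- The posterior-mean estimator for frequency estimation. -/
def PhiOpt {a b n : ℕ} (Q : Matrix (Fin b) (Fin a) ℝ) (μ : Measure (Fin a → ℝ))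
    (y : Fin n → Fin b) : Fin a → ℝ :=
  fun α => (∑ xv : (Fin n → Fin a), wgt Q μ xv y * freqVec xv α) /
    (∑ xv : (Fin n → Fin a), wgt Q μ xv y)

/-- `P(φ, y⃗) = ∑_{x⃗ : F(x⃗) = φ} w(x⃗, y⃗)`. -/
def Pphi {a b n : ℕ} (Q : Matrix (Fin b) (Fin a) ℝ) (μ : Measure (Fin a → ℝ))
    (φ : Fin a → ℝ) (y : Fin n → Fin b) : ℝ := by
  classical
  exact ∑ xv ∈ Finset.univ.filter (fun xv : Fin n → Fin a => freqVec xv = φ), wgt Q μ xv y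

/-- Conditional Shannon entropy `H_n(F | Y⃗)` (terms with zero probability vanish since
`Real.log 0 = 0`). -/
def HFcond {a b : ℕ} (Q : Matrix (Fin b) (Fin a) ℝ) (μ : Measure (Fin a → ℝ))
    (n : ℕ) : ℝ := by
  classical
  exact -(∑ y : (Fin n → Fin b), ∑ φ ∈ Finset.image (freqVec (a := a) (n := n)) Finset.univ,
      Pphi Q μ φ y * Real.log (Pphi Q μ φ y /
        ∑ φ' ∈ Finset.image (freqVec (a := a) (n := n)) Finset.univ, Pphi Q μ φ' y))

/-- The set `Δ = {q ∈ ℝ^m : q ≥ 0, ∑ q ≤ 1}`. -/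
def stdCorner (m : ℕ) : Set (Fin m → ℝ) :=
  {q | (∀ i, 0 ≤ q i) ∧ ∑ i, q i ≤ 1}

/-- The identification `Δ ⊂ ℝ^{a-1} → 𝒫 ⊂ ℝ^a`,
`q ↦ (q_1, …, q_{a-1}, 1 - ∑ q_i)`. -/
def emb (a : ℕ) (q : Fin (a - 1) → ℝ) : Fin a → ℝ :=
  fun x => if h : (x : ℕ) < a - 1 then q ⟨x.1, h⟩ else 1 - ∑ i, q i

/-- `μ` has density `f` (w.r.t. Lebesgue measure on `Δ`). -/
def IsDensity {a : ℕ} (μ : Measure (Fin a → ℝ)) (f : (Fin (a - 1) → ℝ) → ℝ) : Prop :=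
  Measurable f ∧ (∀ q, 0 ≤ f q) ∧ (∫ q in stdCorner (a - 1), f q) = 1 ∧
  ∀ g : (Fin a → ℝ) → ℝ, Measurable g → (∃ C, ∀ p, |g p| ≤ C) →
    (∫ p, g p ∂μ) = ∫ q in stdCorner (a - 1), g (emb a q) * f q

/-- `μ` has continuous density `f`. -/
def IsContDensity {a : ℕ} (μ : Measure (Fin a → ℝ)) (f : (Fin (a - 1) → ℝ) → ℝ) : Prop :=
  ContinuousOn f (stdCorner (a - 1)) ∧ (∀ q, 0 ≤ f q) ∧
  (∫ q in stdCorner (a - 1), f q) = 1 ∧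
  ∀ g : (Fin a → ℝ) → ℝ, Measurable g → (∃ C, ∀ p, |g p| ≤ C) →
    (∫ p, g p ∂μ) = ∫ q in stdCorner (a - 1), g (emb a q) * f q

/-- Normalisation constant `C_{y⃗} = ∫_Δ f(q) L_{y⃗}(p(q)) dλ(q)`. -/
def Cw {a b n : ℕ} (Q : Matrix (Fin b) (Fin a) ℝ) (f : (Fin (a - 1) → ℝ) → ℝ)
    (y : Fin n → Fin b) : ℝ :=
  ∫ q in stdCorner (a - 1), f q * lik Q y (emb a q)

/-- Posterior density `g_{y⃗}(q) = f(q) L_{y⃗}(p(q)) / C_{y⃗}`. -/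
def gpost {a b n : ℕ} (Q : Matrix (Fin b) (Fin a) ℝ) (f : (Fin (a - 1) → ℝ) → ℝ)
    (y : Fin n → Fin b) (q : Fin (a - 1) → ℝ) : ℝ :=
  f q * lik Q y (emb a q) / Cw Q f y

/-- Conditional differential entropy `h_n(P | Y⃗)`. -/
def hCond {a b : ℕ} (Q : Matrix (Fin b) (Fin a) ℝ) (f : (Fin (a - 1) → ℝ) → ℝ)
    (n : ℕ) : ℝ :=
  ∑ y : (Fin n → Fin b),
    Cw Q f y * (-(∫ q in stdCorner (a - 1), gpost Q f y q * Real.log (gpost Q f y q)))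

/-- The matrix `D_p = Qᵀ · diag(Qp)⁻¹ · Q`. -/
def Dmat {a b : ℕ} (Q : Matrix (Fin b) (Fin a) ℝ) (p : Fin a → ℝ) :
    Matrix (Fin a) (Fin a) ℝ :=
  Qᵀ * Matrix.diagonal (fun y => (Q.mulVec p y)⁻¹) * Q

/-- The constant `γ_μ(Q)`. -/
def gammaMu {a b : ℕ} (Q : Matrix (Fin b) (Fin a) ℝ) (μ : Measure (Fin a → ℝ)) : ℝ :=
  (((a : ℝ) - 1) / 2) * Real.log (2 * π * Real.exp 1) -
    (1 / 2) * ∫ p, Real.log (Dmat Q p).det ∂μ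

/-- The truncated column `w_x = (Q_{1|x}, …, Q_{b-1|x})`. -/
def wcol {a b : ℕ} (Q : Matrix (Fin b) (Fin a) ℝ) (x : Fin a) : Fin (b - 1) → ℝ :=
  fun y => Q ⟨y.1, lt_of_lt_of_le y.2 (Nat.sub_le b 1)⟩ x

/-- The matrix `E_x = diag(w_x) - w_x w_xᵀ`. -/
def Emat {a b : ℕ} (Q : Matrix (Fin b) (Fin a) ℝ) (x : Fin a) :
    Matrix (Fin (b - 1)) (Fin (b - 1)) ℝ :=
  Matrix.diagonal (wcol Q x) - Matrix.vecMulVec (wcol Q x) (wcol Q x)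

/-- The matrix `G_p = ∑ x, p_x E_x`. -/
def Gmat {a b : ℕ} (Q : Matrix (Fin b) (Fin a) ℝ) (p : Fin a → ℝ) :
    Matrix (Fin (b - 1)) (Fin (b - 1)) ℝ :=
  ∑ x, p x • Emat Q x

/-- The constant `δ_μ(Q)`. -/
def deltaMu {a b : ℕ} (Q : Matrix (Fin b) (Fin a) ℝ) (μ : Measure (Fin a → ℝ)) : ℝ :=
  gammaMu Q μ +
    (1 / 2) * ∫ p, (Real.log (Gmat Q p).det - ∑ y, Real.log (Q.mulVec p y)) ∂μ

/-- `Q` satisfies `ε`-local differential privacy. -/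
def SatisfiesLDP {a b : ℕ} (Q : Matrix (Fin b) (Fin a) ℝ) (ε : ℝ) : Prop :=
  ∀ x x' : Fin a, ∀ y : Fin b, Q y x' ≤ Real.exp ε * Q y x

section Entropy

variable {ι κ Ω : Type*}

lemma sum_mul_log_le_sum_mul_log_div_sum {s : Finset ι} {p g : ι → ℝ} (hp : ∀ i ∈ s, 0 ≤ p i)
    (hg : ∀ i ∈ s, 0 < g i) (hsum : ∑ i ∈ s, g i ≤ 1) :
    ∑ i ∈ s, p i * log (g i) ≤ ∑ i ∈ s, p i * log (p i / ∑ j ∈ s, p j) := by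
  set P := ∑ j ∈ s, p j
  have hP : 0 ≤ P := sum_nonneg hp
  have hterm : ∀ i ∈ s, p i * log (g i) - p i * log (p i / P) ≤ P * g i - p i := by
    intro i hi
    have hPg : 0 ≤ P * g i := mul_nonneg hP (hg i hi).le
    rcases (hp i hi).eq_or_lt with hpi | hpi
    · simpa [← hpi] using hPg
    · have hPpos : 0 < P := hpi.trans_le (single_le_sum hp hi)
      have hgi := hg i hi
      rw [← mul_sub, ← log_div hgi.ne' (by positivity)]
      calc p i * log (g i / (p i / P)) ≤ p i * (g i / (p i / P) - 1) :=
            mul_le_mul_of_nonneg_left (log_le_sub_one_of_pos (by positivity)) hpi.le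
        _ = P * g i - p i := by field_simp
  have hle := sum_le_sum hterm
  rw [sum_sub_distrib, sum_sub_distrib, ← mul_sum] at hle
  linarith [mul_le_of_le_one_right hP hsum]

variable [Fintype Ω]

open Classical in
/-- The push-forward of the weight `w` along the statistic `T`. -/
def fiberMass (w : Ω → ℝ) (T : Ω → ι) (i : ι) : ℝ :=
  ∑ ω with T ω = i, w ω

lemma fiberMass_nonneg {w : Ω → ℝ} (hw : ∀ ω, 0 ≤ w ω) (T : Ω → ι) (i : ι) :
    0 ≤ fiberMass w T i :=
  sum_nonneg fun ω _ => hw ω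

lemma le_fiberMass {w : Ω → ℝ} (hw : ∀ ω, 0 ≤ w ω) (T : Ω → ι) (ω : Ω) :
    w ω ≤ fiberMass w T (T ω) :=
  single_le_sum (fun ω _ => hw ω) (by simp)

lemma fiberMass_congr {ι' : Type*} (w : Ω → ℝ) {T : Ω → ι} {T' : Ω → ι'}
    (h : ∀ ω ω', T ω = T ω' ↔ T' ω = T' ω') (ω : Ω) :
    fiberMass w T (T ω) = fiberMass w T' (T' ω) :=
  sum_congr (by ext; simp only [mem_filter, h]) fun _ _ => rfl

lemma sum_image_fiberMass_mul [DecidableEq ι] (w : Ω → ℝ) (T : Ω → ι) (g : ι → ℝ) :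
    ∑ i ∈ univ.image T, fiberMass w T i * g i = ∑ ω, w ω * g (T ω) := by
  rw [← sum_fiberwise_of_maps_to (fun ω _ => mem_image_of_mem T (mem_univ ω))]
  refine sum_congr rfl fun i _ => ?_
  rw [fiberMass, sum_mul]
  exact sum_congr (by congr) fun ω hω => by rw [(mem_filter.1 hω).2]

variable [Fintype κ]

/-- The conditional Shannon entropy of the statistic `T` given `y`, when `(y, ω)` has probability
`w y ω`. Summing over outcomes `ω` rather than over values of `T` makes it depend on `T` only
through its level sets. -/
def condEntropy (w : κ → Ω → ℝ) (T : Ω → ι) : ℝ :=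
  -∑ y, ∑ ω, w y ω * log (fiberMass (w y) T (T ω) / ∑ ω', w y ω')

lemma condEntropy_congr {ι' : Type*} (w : κ → Ω → ℝ) {T : Ω → ι} {T' : Ω → ι'}
    (h : ∀ ω ω', T ω = T ω' ↔ T' ω = T' ω') : condEntropy w T = condEntropy w T' := by
  simp only [condEntropy, fun y => fiberMass_congr (w y) h]

lemma neg_log_le_condEntropy {w : κ → Ω → ℝ} (hw : ∀ y ω, 0 ≤ w y ω) (hw1 : ∑ y, ∑ ω, w y ω = 1)
    {T : Ω → ι} {β : κ → ℝ} {B : ℝ} (hβ : ∀ y ω, fiberMass (w y) T (T ω) ≤ β y)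
    (hβB : ∑ y, β y ≤ B) : -log B ≤ condEntropy w T := by
  have hΩ : Nonempty Ω := by
    by_contra hΩ
    simp [not_nonempty_iff.1 hΩ] at hw1
  have hβ0 : ∀ y, 0 ≤ β y := fun y =>
    (fiberMass_nonneg (hw y) T _).trans (hβ y (Classical.arbitrary Ω))
  have hB : 0 ≤ B := (sum_nonneg fun y _ => hβ0 y).trans hβB
  have hterm : ∀ y ω, w y ω * (log (fiberMass (w y) T (T ω) / ∑ ω', w y ω') - log B) ≤
      w y ω * (β y / ((∑ ω', w y ω') * B)) - w y ω := by
    intro y ω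
    rcases (hw y ω).eq_or_lt with hω | hω
    · simp [← hω]
    have hW : 0 < ∑ ω', w y ω' := hω.trans_le (single_le_sum (fun ω _ => hw y ω) (mem_univ ω))
    have hfib : 0 < fiberMass (w y) T (T ω) := hω.trans_le (le_fiberMass (hw y) T ω)
    have hBpos : 0 < B :=
      (hfib.trans_le (hβ y ω)).trans_le
        ((single_le_sum (fun y _ => hβ0 y) (mem_univ y)).trans hβB)
    rw [← log_div (by positivity) hBpos.ne', div_div, ← mul_sub_one]
    refine mul_le_mul_of_nonneg_left ((log_le_sub_one_of_pos (by positivity)).trans ?_) hω.le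
    gcongr
    exact hβ y ω
  have hrow : ∀ y, ∑ ω, w y ω * (log (fiberMass (w y) T (T ω) / ∑ ω', w y ω') - log B) ≤
      β y / B - ∑ ω, w y ω := by
    intro y
    refine (sum_le_sum fun ω _ => hterm y ω).trans ?_
    rw [sum_sub_distrib, ← sum_mul, ← div_div, div_right_comm, mul_div_left_comm]
    gcongr
    exact mul_le_of_le_one_right (div_nonneg (hβ0 y) hB) (div_self_le_one _)
  have htotal := sum_le_sum fun y (_ : y ∈ univ) => hrow y
  simp only [mul_sub, sum_sub_distrib, ← sum_mul, hw1, ← sum_div] at htotal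
  rw [condEntropy]
  linarith [div_le_one_of_le₀ hβB hB]

lemma condEntropy_le_of_sum_image_le_one [DecidableEq ι] {w : κ → Ω → ℝ}
    (hw : ∀ y ω, 0 ≤ w y ω) (T : Ω → ι) {G : κ → ι → ℝ} (hG : ∀ y i, 0 < G y i)
    (hG1 : ∀ y, ∑ i ∈ univ.image T, G y i ≤ 1) :
    condEntropy w T ≤ -∑ y, ∑ ω, w y ω * log (G y (T ω)) := by
  refine neg_le_neg (sum_le_sum fun y _ => ?_)
  have hmass : ∑ i ∈ univ.image T, fiberMass (w y) T i = ∑ ω, w y ω := by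
    simpa using sum_image_fiberMass_mul (w y) T 1
  rw [← sum_image_fiberMass_mul (w y) T fun i => log (G y i), ← hmass,
    ← sum_image_fiberMass_mul (w y) T fun i => log (fiberMass (w y) T i / _)]
  exact sum_mul_log_le_sum_mul_log_div_sum (fun i _ => fiberMass_nonneg (hw y) T i)
    (fun i _ => hG y i) (hG1 y)

end Entropy

section LatticeEntropy

lemma integral_sub_sq_unit_cell (k c : ℝ) :
    ∫ t in (-(1 / 2) + k)..(-(1 / 2) + k + 1), (t - c) ^ 2 = (k - c) ^ 2 + 1 / 12 := by
  rw [intervalIntegral.integral_comp_sub_right (fun t => t ^ 2), integral_pow]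
  push_cast
  ring

/-- Jensen's inequality for `exp` on a unit cell, on which the squared deviation from the centre
has mean `1 / 12`. -/
lemma exp_neg_sq_le_integral_unit_cell (s k c : ℝ) :
    rexp (-(k - c) ^ 2 / (2 * s)) ≤
      rexp (1 / (24 * s)) *
        ∫ t in (-(1 / 2) + k)..(-(1 / 2) + k + 1), rexp (-(t - c) ^ 2 / (2 * s)) := by
  have hle : -(1 / 2) + k ≤ -(1 / 2) + k + 1 := by linarith
  have hmeasure : IsProbabilityMeasure
      (volume.restrict (Set.Ioc (-(1 / 2) + k) (-(1 / 2) + k + 1))) := ⟨by simp⟩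
  have hjensen := convexOn_exp.map_integral_le continuous_exp.continuousOn isClosed_univ
    (μ := volume.restrict (Set.Ioc (-(1 / 2) + k) (-(1 / 2) + k + 1)))
    (f := fun t => -(t - c) ^ 2 / (2 * s)) (by simp)
    (Continuous.integrableOn_Ioc (by fun_prop))
    (Continuous.integrableOn_Ioc (by unfold Function.comp; fun_prop))
  rw [← intervalIntegral.integral_of_le hle, ← intervalIntegral.integral_of_le hle,
    intervalIntegral.integral_div, intervalIntegral.integral_neg,
    integral_sub_sq_unit_cell] at hjensen
  calc rexp (-(k - c) ^ 2 / (2 * s))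
      = rexp (1 / (24 * s)) * rexp (-((k - c) ^ 2 + 1 / 12) / (2 * s)) := by
        rw [← Real.exp_add]; congr 1; ring
    _ ≤ _ := mul_le_mul_of_nonneg_left hjensen (Real.exp_pos _).le

lemma sum_exp_neg_sq_le {s : ℝ} (hs : 0 < s) (c : ℝ) (S : Finset ℤ) :
    ∑ k ∈ S, rexp (-(k - c) ^ 2 / (2 * s)) ≤ rexp (1 / (24 * s)) * √(2 * π * s) := by
  have hfun : ∀ t : ℝ, rexp (-(t - c) ^ 2 / (2 * s)) = rexp (-(1 / (2 * s)) * (t - c) ^ 2) :=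
    fun t => by ring_nf
  have hint : Integrable fun t : ℝ => rexp (-(t - c) ^ 2 / (2 * s)) := by
    simp only [hfun]
    exact (integrable_exp_neg_mul_sq (by positivity)).comp_sub_right c
  have hmass : ∫ t : ℝ, rexp (-(t - c) ^ 2 / (2 * s)) = √(2 * π * s) := by
    simp only [hfun]
    rw [integral_sub_right_eq_self (fun t => rexp (-(1 / (2 * s)) * t ^ 2)), integral_gaussian]
    congr 1
    field_simp
  calc ∑ k ∈ S, rexp (-(k - c) ^ 2 / (2 * s))
      ≤ ∑ k ∈ S, rexp (1 / (24 * s)) *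
          ∫ t in Set.Ioc (-(1 / 2) + (k : ℝ)) (-(1 / 2) + k + 1), rexp (-(t - c) ^ 2 / (2 * s)) :=
        sum_le_sum fun k _ => by
          rw [← intervalIntegral.integral_of_le (by linarith)]
          exact exp_neg_sq_le_integral_unit_cell s k c
    _ = rexp (1 / (24 * s)) * ∫ t in ⋃ k ∈ S, Set.Ioc (-(1 / 2) + (k : ℝ)) (-(1 / 2) + k + 1),
          rexp (-(t - c) ^ 2 / (2 * s)) := by
        rw [← mul_sum, integral_biUnion_finset S (fun _ _ => measurableSet_Ioc)
          ((Set.pairwise_disjoint_Ioc_add_intCast _).set_pairwise _) fun _ _ => hint.integrableOn]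
    _ ≤ rexp (1 / (24 * s)) * √(2 * π * s) := by
        rw [← hmass]
        exact mul_le_mul_of_nonneg_left (setIntegral_le_integral hint
          (Eventually.of_forall fun t => (Real.exp_pos _).le)) (Real.exp_pos _).le

variable {ι κ Ω : Type*} [Fintype ι] [Fintype κ] [Fintype Ω]

/-- Gibbs' inequality against a product of discretised Gaussians. -/
lemma condEntropy_le_of_variance {w : κ → Ω → ℝ} (hw : ∀ y ω, 0 ≤ w y ω)
    (hw1 : ∑ y, ∑ ω, w y ω = 1) (T : Ω → ι → ℤ) (e : κ → ι → ℝ) {s : ℝ} (hs : 0 < s) :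
    condEntropy w T ≤ (∑ y, ∑ ω, w y ω * ∑ x, (T ω x - e y x) ^ 2) / (2 * s) +
      Fintype.card ι * (1 / (24 * s) + log (2 * π * s) / 2) := by
  classical
  set Z := rexp (1 / (24 * s)) * √(2 * π * s)
  have hZpos : 0 < Z := by positivity
  let g : κ → ι → ℤ → ℝ := fun y x k => rexp (-(k - e y x) ^ 2 / (2 * s)) / Z
  have hg : ∀ y x k, 0 < g y x k := fun y x k => by positivity
  let G : κ → (ι → ℤ) → ℝ := fun y k => ∏ x, g y x (k x)
  have hG : ∀ y k, 0 < G y k := fun y k => prod_pos fun x _ => hg y x (k x)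
  have hGsum : ∀ y, ∑ k ∈ univ.image T, G y k ≤ 1 := by
    intro y
    calc ∑ k ∈ univ.image T, G y k
        ≤ ∑ k ∈ Fintype.piFinset fun x => univ.image fun ω => T ω x, G y k := by
          refine sum_le_sum_of_subset_of_nonneg (image_subset_iff.2 fun ω _ => ?_)
            fun k _ _ => (hG y k).le
          exact Fintype.mem_piFinset.2 fun x => mem_image_of_mem _ (mem_univ ω)
      _ = ∏ x, ∑ k ∈ univ.image fun ω => T ω x, g y x k := (prod_univ_sum _ _).symm
      _ ≤ 1 := prod_le_one (fun x _ => sum_nonneg fun k _ => (hg y x k).le) fun x _ => by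
          rw [← sum_div]
          exact div_le_one_of_le₀ (sum_exp_neg_sq_le hs _ _) hZpos.le
  have hlogZ : log Z = 1 / (24 * s) + log (2 * π * s) / 2 := by
    rw [log_mul (by positivity) (by positivity), log_exp, log_sqrt (by positivity)]
  have hlogG : ∀ y k, log (G y k) =
      -((∑ x, (k x - e y x) ^ 2) / (2 * s)) - Fintype.card ι * log Z := by
    intro y k
    rw [log_prod fun x _ => (hg y x (k x)).ne']
    simp only [g, log_div (Real.exp_pos _).ne' hZpos.ne', log_exp, sum_sub_distrib, neg_div,
      sum_neg_distrib, ← sum_div, sum_const, card_univ, nsmul_eq_mul]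
  refine (condEntropy_le_of_sum_image_le_one hw T hG hGsum).trans_eq ?_
  simp only [hlogG, mul_sub, mul_neg, sum_sub_distrib, sum_neg_distrib, ← sum_mul, hw1, one_mul,
    mul_div_assoc', ← sum_div, hlogZ]
  ring

/-- The variance `s = V / d + 1 / 12` minimises the bound of `condEntropy_le_of_variance`. -/
lemma exp_condEntropy_le [Nonempty ι] {w : κ → Ω → ℝ} (hw : ∀ y ω, 0 ≤ w y ω)
    (hw1 : ∑ y, ∑ ω, w y ω = 1) (T : Ω → ι → ℤ) (e : κ → ι → ℝ) :
    rexp (2 / Fintype.card ι * condEntropy w T) ≤ 2 * π * rexp 1 *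
      ((∑ y, ∑ ω, w y ω * ∑ x, (T ω x - e y x) ^ 2) / Fintype.card ι + 1 / 12) := by
  set V := ∑ y, ∑ ω, w y ω * ∑ x, (T ω x - e y x) ^ 2
  have hV : 0 ≤ V := sum_nonneg fun y _ => sum_nonneg fun ω _ =>
    mul_nonneg (hw y ω) (sum_nonneg fun x _ => sq_nonneg _)
  have hd : (0 : ℝ) < Fintype.card ι := by exact_mod_cast Fintype.card_pos
  set d := (Fintype.card ι : ℝ)
  set s := V / d + 1 / 12 with hs
  have hspos : 0 < s := by positivity
  have hVs : V = d * (s - 1 / 12) := by rw [hs]; field_simp; ring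
  have hexponent : 2 / d * condEntropy w T ≤ 1 + log (2 * π * s) := by
    calc 2 / d * condEntropy w T
        ≤ 2 / d * (V / (2 * s) + d * (1 / (24 * s) + log (2 * π * s) / 2)) := by
          gcongr
          exact condEntropy_le_of_variance hw hw1 T e hspos
      _ = 1 + log (2 * π * s) := by rw [hVs]; field_simp; ring
  calc rexp (2 / d * condEntropy w T) ≤ rexp (1 + log (2 * π * s)) := exp_le_exp.2 hexponent
    _ = 2 * π * rexp 1 * s := by rw [Real.exp_add, exp_log (by positivity)]; ring

end LatticeEntropy

section Circle

lemma integral_fourier (n : ℤ) : ∫ t : UnitAddCircle, fourier n t = if n = 0 then 1 else 0 := by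
  split_ifs with hn
  · simp [hn, measureReal_def]
  · exact integral_eq_zero_of_add_right_eq_neg (fourier_add_half_inv_index hn one_pos)

/-- Follows from `1 - cos (2πt) ≥ 8t²` on a period and the Gaussian integral. The factor `e²` pays
for replacing `B` by `1 + B`, which keeps the bound meaningful as `B → 0`. -/
lemma integral_exp_neg_mul_one_sub_re_fourier_le {B : ℝ} (hB : 0 ≤ B) :
    ∫ t : UnitAddCircle, rexp (-(B * (1 - (fourier 1 t : ℂ).re))) ≤ rexp 2 / √(1 + B) := by
  have hgauss : Integrable fun t : ℝ => rexp 2 * rexp (-(8 * (1 + B)) * t ^ 2) :=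
    (integrable_exp_neg_mul_sq (by positivity)).const_mul _
  have hre : ∀ t : ℝ, (fourier 1 (t : UnitAddCircle) : ℂ).re = cos (2 * π * t) := fun t => by
    rw [fourier_coe_apply, ← Complex.exp_ofReal_mul_I_re]
    congr 2
    push_cast
    ring
  calc ∫ t : UnitAddCircle, rexp (-(B * (1 - (fourier 1 t : ℂ).re)))
      = ∫ t in Set.Ioc (-(1 / 2) : ℝ) (-(1 / 2) + 1), rexp (-(B * (1 - cos (2 * π * t)))) := by
        rw [← UnitAddCircle.integral_preimage (-(1 / 2))]
        simp only [hre]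
    _ ≤ ∫ t in Set.Ioc (-(1 / 2) : ℝ) (-(1 / 2) + 1),
          rexp 2 * rexp (-(8 * (1 + B)) * t ^ 2) := by
        refine setIntegral_mono_on (Continuous.integrableOn_Ioc (by fun_prop)) hgauss.integrableOn
          measurableSet_Ioc fun t ht => ?_
        rw [← Real.exp_add, exp_le_exp]
        have hcos : cos (2 * π * t) ≤ 1 - 8 * t ^ 2 := by
          refine (cos_le_one_sub_mul_cos_sq ?_).trans_eq ?_
          · rw [abs_le]
            constructor <;> nlinarith [ht.1, ht.2, pi_pos]
          · field_simp
            ring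
        nlinarith [neg_one_le_cos (2 * π * t)]
    _ ≤ ∫ t : ℝ, rexp 2 * rexp (-(8 * (1 + B)) * t ^ 2) :=
        setIntegral_le_integral hgauss (Eventually.of_forall fun t => by positivity)
    _ = rexp 2 * √(π / (8 * (1 + B))) := by rw [integral_const_mul, integral_gaussian]
    _ ≤ rexp 2 / √(1 + B) := by
        rw [div_eq_mul_inv (rexp 2), ← sqrt_inv, ← div_div, ← one_div]
        gcongr
        linarith [pi_le_four]

end Circle

section CharacterSums

variable {ι : Type*} [Fintype ι]

lemma norm_add_sum_mul_sq_le (r₀ : ℝ) {r : ι → ℝ} (hr : ∀ x, 0 ≤ r x) {z : ι → ℂ}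
    (hz : ∀ x, ‖z x‖ ≤ 1) :
    ‖r₀ + ∑ x, r x * z x‖ ^ 2 ≤
      (r₀ + ∑ x, r x) ^ 2 - 2 * r₀ * ∑ x, r x * (1 - (z x).re) := by
  set S := ∑ x, r x * z x with hS
  have hnorm : ‖S‖ ≤ ∑ x, r x := (norm_sum_le _ _).trans <| sum_le_sum fun x _ => by
    rw [norm_mul, Complex.norm_of_nonneg (hr x)]
    exact mul_le_of_le_one_right (hr x) (hz x)
  have hre : S.re = ∑ x, r x - ∑ x, r x * (1 - (z x).re) := by
    simp [hS, mul_sub, Complex.re_sum]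
  calc ‖r₀ + S‖ ^ 2 = r₀ ^ 2 + 2 * r₀ * S.re + ‖S‖ ^ 2 := by
        simp only [Complex.sq_norm, Complex.normSq_apply, Complex.add_re, Complex.add_im,
          Complex.ofReal_re, Complex.ofReal_im]
        ring
    _ ≤ r₀ ^ 2 + 2 * r₀ * S.re + (∑ x, r x) ^ 2 := by gcongr
    _ = _ := by rw [hre]; ring

lemma norm_add_sum_mul_le {r₀ : ℝ} {r : ι → ℝ} (hr₀ : 0 ≤ r₀) (hr : ∀ x, 0 ≤ r x)
    (hsum : r₀ + ∑ x, r x ≤ 1) {z : ι → ℂ} (hz : ∀ x, ‖z x‖ ≤ 1) :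
    ‖r₀ + ∑ x, r x * z x‖ ≤ (r₀ + ∑ x, r x) * rexp (-(r₀ * ∑ x, r x * (1 - (z x).re))) := by
  set D := ∑ x, r x * (1 - (z x).re)
  have hD : 0 ≤ D := sum_nonneg fun x _ =>
    mul_nonneg (hr x) (sub_nonneg.2 ((Complex.re_le_norm _).trans (hz x)))
  have hR : 0 ≤ r₀ + ∑ x, r x := add_nonneg hr₀ (sum_nonneg fun x _ => hr x)
  refine (sq_le_sq₀ (norm_nonneg _) (by positivity)).1 ?_
  calc ‖r₀ + ∑ x, r x * z x‖ ^ 2 ≤ (r₀ + ∑ x, r x) ^ 2 - 2 * r₀ * D :=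
        norm_add_sum_mul_sq_le r₀ hr hz
    _ ≤ (r₀ + ∑ x, r x) ^ 2 - (r₀ + ∑ x, r x) ^ 2 * (2 * r₀ * D) :=
        sub_le_sub_left (mul_le_of_le_one_left (by positivity) (pow_le_one₀ hR hsum)) _
    _ = (r₀ + ∑ x, r x) ^ 2 * (-(2 * r₀ * D) + 1) := by ring
    _ ≤ (r₀ + ∑ x, r x) ^ 2 * rexp (-(2 * r₀ * D)) := by
        gcongr
        exact add_one_le_exp _
    _ = _ := by rw [mul_pow, ← Real.exp_nat_mul]; congr 2; push_cast; ring

/-- Fourier inversion on the torus, with the triangle inequality. -/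
lemma fiberMass_le_integral_norm {Ω : Type*} [Fintype Ω] (w : Ω → ℝ) (T : Ω → ι → ℤ) (k : ι → ℤ) :
    fiberMass w T k ≤
      ∫ t : ι → UnitAddCircle, ‖∑ ω, (w ω : ℂ) * ∏ x, fourier (T ω x) (t x)‖ := by
  classical
  have hortho : ∀ ω, ∫ t : ι → UnitAddCircle, ∏ x, (fourier (T ω x - k x) (t x) : ℂ) =
      if T ω = k then 1 else 0 := by
    intro ω
    rw [integral_fintype_prod_volume_eq_prod (fun x t => (fourier (T ω x - k x) t : ℂ))]
    simp only [integral_fourier, sub_eq_zero, prod_ite_zero, prod_const_one, funext_iff, mem_univ,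
      true_imp_iff]
  have hfiber : (fiberMass w T k : ℂ) = ∫ t : ι → UnitAddCircle,
      ∑ ω, (w ω : ℂ) * ∏ x, fourier (T ω x - k x) (t x) := by
    rw [integral_finsetSum _ fun ω _ => (Continuous.integrable_of_hasCompactSupport (by fun_prop)
      (HasCompactSupport.of_compactSpace _))]
    simp only [integral_const_mul, hortho, mul_ite, mul_one, mul_zero, fiberMass, sum_filter]
    push_cast
    refine sum_congr rfl fun ω _ => ?_
    split_ifs <;> rfl
  calc fiberMass w T k ≤ ‖(fiberMass w T k : ℂ)‖ := by
        rw [Complex.norm_real]; exact le_abs_self _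
    _ ≤ ∫ t : ι → UnitAddCircle, ‖∑ ω, (w ω : ℂ) * ∏ x, fourier (T ω x - k x) (t x)‖ := by
        rw [hfiber]; exact norm_integral_le_integral_norm _
    _ = _ := by
        refine integral_congr_ae (Eventually.of_forall fun t => ?_)
        have hshift : ∀ ω, (w ω : ℂ) * ∏ x, (fourier (T ω x - k x) (t x) : ℂ) =
            (∏ x, fourier (-k x) (t x)) * ((w ω : ℂ) * ∏ x, fourier (T ω x) (t x)) := fun ω => by
          simp only [sub_eq_add_neg, fourier_add, prod_mul_distrib]
          ring
        simp only [hshift, ← mul_sum, norm_mul, norm_prod]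
        simp [fourier_apply, Circle.norm_coe]

end CharacterSums

section Counts

variable {α J : Type*} [DecidableEq α] [Fintype J]

/-- The numbers of occurrences in the word `xv` of the letters other than `c`. -/
def countsOff (c : α) (xv : J → α) : {x // x ≠ c} → ℤ := fun x => #{i | xv i = x}

lemma countsOff_eq_iff {c : α} {xv xv' : J → α} :
    countsOff c xv = countsOff c xv' ↔ ∀ x, #{i | xv i = x} = #{i | xv' i = x} := by
  refine ⟨fun h => ?_, fun h => funext fun x => by simp [countsOff, h]⟩
  have hoff : ∀ x ≠ c, #{i | xv i = x} = #{i | xv' i = x} := fun x hx => by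
    simpa [countsOff] using congrFun h ⟨x, hx⟩
  have hc : #{i | xv i = c} = #{i | xv' i = c} := by
    let s := insert c (univ.image xv ∪ univ.image xv')
    have hxv : #univ = ∑ x ∈ s, #{i | xv i = x} :=
      card_eq_sum_card_fiberwise fun i _ => by simp [s]
    have hxv' : #univ = ∑ x ∈ s, #{i | xv' i = x} :=
      card_eq_sum_card_fiberwise fun i _ => by simp [s]
    rw [← add_sum_erase s _ (mem_insert_self c _)] at hxv hxv'
    rw [sum_congr rfl fun x hx => hoff x (ne_of_mem_erase hx)] at hxv
    omega
  intro x
  by_cases hx : x = c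
  · rw [hx, hc]
  · exact hoff x hx

variable [DecidableEq J] [Fintype α]

lemma sum_prod_mul_prod_fourier_countsOff (r : J → α → ℝ) (c : α)
    (t : {x // x ≠ c} → UnitAddCircle) :
    ∑ xv : J → α, ((∏ i, r i (xv i) : ℝ) : ℂ) * ∏ x, fourier (countsOff c xv x) (t x) =
      ∏ i, (r i c + ∑ x : {x // x ≠ c}, r i x * fourier 1 (t x)) := by
  let z : α → ℂ := fun x => if h : x ≠ c then fourier 1 (t ⟨x, h⟩) else 1
  have hz : ∀ x : {x // x ≠ c}, z x = fourier 1 (t x) := fun x => dif_pos x.2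
  have hzc : z c = 1 := dif_neg (not_not.2 rfl)
  have hcounts : ∀ xv : J → α,
      ∏ x, (fourier (countsOff c xv x) (t x) : ℂ) = ∏ i, z (xv i) := by
    intro xv
    rw [← prod_fiberwise' univ xv z, Fintype.prod_eq_mul_prod_subtype_ne _ c]
    simp [hz, hzc, countsOff, fourier_apply, AddCircle.toCircle_nsmul]
  calc ∑ xv : J → α, ((∏ i, r i (xv i) : ℝ) : ℂ) * ∏ x, fourier (countsOff c xv x) (t x)
      = ∑ xv : J → α, ∏ i, (r i (xv i) * z (xv i)) := by
        simp only [hcounts, prod_mul_distrib]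
        push_cast
        rfl
    _ = ∏ i, ∑ x, r i x * z x := by rw [prod_univ_sum, Fintype.piFinset_univ]
    _ = _ := by
        simp only [Fintype.sum_eq_add_sum_subtype_ne _ c, hz, hzc, mul_one]

end Counts

section LocalBound

variable {α : Type*} [DecidableEq α] [Fintype α]

/-- The size of the fibres of `countsOff c` under the law `p`: for `A` of order `n` it is
`(e²)^(a-1) ∏ x ≠ c, (1 + A p x)^(-1/2)`, the density of a lattice Gaussian with variances `A p x`,
and still bounded where some `p x` vanish. -/
def spread (A : ℝ) (c : α) (p : α → ℝ) : ℝ :=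
  ∏ x : {x // x ≠ c}, rexp 2 / √(1 + A * p x)

lemma spread_nonneg (A : ℝ) (c : α) (p : α → ℝ) : 0 ≤ spread A c p :=
  prod_nonneg fun x _ => by positivity

variable {p : α → ℝ} {δ κ : ℝ} {c : α}

lemma norm_channel_factor_le (hp : ∀ x, 0 ≤ p x) (hp1 : ∑ x, p x = 1) (hδ : 0 ≤ δ) (hκc : κ ≤ p c)
    {q : α → ℝ} (hδq : ∀ x, δ ≤ q x) (hq1 : ∀ x, q x ≤ 1)
    {z : {x // x ≠ c} → ℂ} (hz : ∀ x, ‖z x‖ ≤ 1) :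
    ‖((p c * q c : ℝ) : ℂ) + ∑ x : {x // x ≠ c}, ((p x * q x : ℝ) : ℂ) * z x‖ ≤
      (∑ x, p x * q x) * rexp (-(δ ^ 2 * κ * ∑ x : {x // x ≠ c}, p x * (1 - (z x).re))) := by
  have hq : ∀ x, 0 ≤ q x := fun x => hδ.trans (hδq x)
  have hmass : ∑ x, p x * q x = p c * q c + ∑ x : {x // x ≠ c}, p x * q x :=
    Fintype.sum_eq_add_sum_subtype_ne _ c
  have hmass1 : ∑ x, p x * q x ≤ 1 :=
    (sum_le_sum fun x _ => mul_le_of_le_one_right (hp x) (hq1 x)).trans_eq hp1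
  refine (norm_add_sum_mul_le (r := fun x : {x // x ≠ c} => p x * q x)
    (mul_nonneg (hp c) (hq c)) (fun x => mul_nonneg (hp x) (hq x))
    (hmass.symm.trans_le hmass1) hz).trans ?_
  rw [← hmass]
  refine mul_le_mul_of_nonneg_left (exp_le_exp.2 (neg_le_neg ?_))
    (sum_nonneg fun x _ => mul_nonneg (hp x) (hq x))
  have hre : ∀ x, 0 ≤ 1 - (z x).re := fun x =>
    sub_nonneg.2 ((Complex.re_le_norm _).trans (hz x))
  rw [mul_sum, mul_sum]
  refine sum_le_sum fun x _ => ?_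
  calc δ ^ 2 * κ * (p x * (1 - (z x).re)) = κ * δ * (p x * δ * (1 - (z x).re)) := by ring
    _ ≤ p c * q c * (p x * q x * (1 - (z x).re)) :=
        mul_le_mul (mul_le_mul hκc (hδq c) hδ (hp c))
          (mul_le_mul_of_nonneg_right (mul_le_mul_of_nonneg_left (hδq x) (hp x)) (hre x))
          (mul_nonneg (mul_nonneg (hp x) hδ) (hre x)) (mul_nonneg (hp c) (hq c))

lemma fiberMass_countsOff_le {J : Type*} [Fintype J] [DecidableEq J] {q : J → α → ℝ}
    (hp : ∀ x, 0 ≤ p x) (hp1 : ∑ x, p x = 1) (hδ : 0 ≤ δ)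
    (hκ : 0 ≤ κ) (hκc : κ ≤ p c) (hδq : ∀ i x, δ ≤ q i x) (hq1 : ∀ i x, q i x ≤ 1)
    (k : {x // x ≠ c} → ℤ) :
    fiberMass (fun xv : J → α => ∏ i, p (xv i) * q i (xv i)) (countsOff c) k ≤
      (∏ i, ∑ x, p x * q i x) * spread (Fintype.card J * (δ ^ 2 * κ)) c p := by
  set A := Fintype.card J * (δ ^ 2 * κ) with hA
  have hA0 : 0 ≤ A := by positivity
  have hpointwise : ∀ t : {x // x ≠ c} → UnitAddCircle,
      ‖∑ xv : J → α, ((∏ i, p (xv i) * q i (xv i) : ℝ) : ℂ) *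
        ∏ x, fourier (countsOff c xv x) (t x)‖ ≤
      (∏ i, ∑ x, p x * q i x) *
        ∏ x : {x // x ≠ c}, rexp (-(A * p x * (1 - (fourier 1 (t x) : ℂ).re))) := by
    intro t
    rw [sum_prod_mul_prod_fourier_countsOff (fun i x => p x * q i x), norm_prod]
    refine (prod_le_prod (fun _ _ => norm_nonneg _) fun i _ => norm_channel_factor_le hp hp1 hδ
      hκc (hδq i) (hq1 i) fun x => by simp [fourier_apply, Circle.norm_coe]).trans_eq ?_
    rw [prod_mul_distrib, prod_const, ← Real.exp_sum, ← Real.exp_nat_mul, card_univ]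
    congr 2
    rw [mul_neg, ← mul_assoc, ← hA, mul_sum, sum_neg_distrib]
    simp only [mul_assoc]
  calc _ ≤ ∫ t : {x // x ≠ c} → UnitAddCircle, (∏ i, ∑ x, p x * q i x) *
          ∏ x : {x // x ≠ c}, rexp (-(A * p x * (1 - (fourier 1 (t x) : ℂ).re))) :=
        (fiberMass_le_integral_norm _ _ k).trans <| integral_mono
          (Continuous.integrable_of_hasCompactSupport (by fun_prop)
            (HasCompactSupport.of_compactSpace _))
          (Continuous.integrable_of_hasCompactSupport (by fun_prop)
            (HasCompactSupport.of_compactSpace _)) hpointwise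
    _ = (∏ i, ∑ x, p x * q i x) * ∏ x : {x // x ≠ c},
          ∫ t : UnitAddCircle, rexp (-(A * p x * (1 - (fourier 1 t : ℂ).re))) := by
        rw [integral_const_mul, integral_fintype_prod_volume_eq_prod fun (x : {x // x ≠ c}) t =>
          rexp (-(A * p x * (1 - (fourier 1 t : ℂ).re)))]
    _ ≤ _ := by
        have hq : ∀ i x, 0 ≤ q i x := fun i x => hδ.trans (hδq i x)
        exact mul_le_mul_of_nonneg_left (prod_le_prod (fun x _ => by positivity) fun x _ =>
            integral_exp_neg_mul_one_sub_re_fourier_le (mul_nonneg hA0 (hp x)))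
          (prod_nonneg fun i _ => sum_nonneg fun x _ => mul_nonneg (hp x) (hq i x))

end LocalBound

section Spread

variable {α : Type*} [DecidableEq α] [Fintype α]

lemma spread_comp_perm (A : ℝ) (c : α) (p : α → ℝ) (σ : Equiv.Perm α) :
    spread A c (p ∘ σ) = spread A (σ c) p :=
  Fintype.prod_equiv (σ.subtypeEquiv fun _ => σ.injective.ne_iff.symm :
    {x // x ≠ c} ≃ {x // x ≠ σ c}) _ (fun x => rexp 2 / √(1 + A * p x)) fun _ => rfl

lemma continuousOn_spread {A : ℝ} (hA : 0 ≤ A) (c : α) :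
    ContinuousOn (spread A c) {p | ∀ x, 0 ≤ p x} := by
  refine continuousOn_finsetProd _ fun x _ => ContinuousOn.div (by fun_prop) (by fun_prop) ?_
  intro p hp
  have := hp x
  positivity

end Spread

section Corner

variable {m : ℕ}

lemma measurePreserving_of_involutive {E : Type*} [NormedAddCommGroup E] [NormedSpace ℝ E]
    [MeasurableSpace E] [BorelSpace E] [FiniteDimensional ℝ E] (μ : Measure E)
    [μ.IsAddHaarMeasure] {L : E →ₗ[ℝ] E} (hL : Function.Involutive L) :
    MeasurePreserving L μ μ := by
  have hdet : LinearMap.det L * LinearMap.det L = 1 := by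
    rw [← LinearMap.det_comp, show L ∘ₗ L = LinearMap.id from LinearMap.ext hL, LinearMap.det_id]
  have habs : |(LinearMap.det L)⁻¹| = 1 := by
    rcases mul_self_eq_one_iff.1 hdet with h | h <;> simp [h]
  refine ⟨L.continuous_of_finiteDimensional.measurable, ?_⟩
  rw [Measure.map_linearMap_addHaar_eq_smul_addHaar μ (left_ne_zero_of_mul_eq_one hdet), habs,
    ENNReal.ofReal_one, one_smul]

/-- The affine involution of the corner which exchanges the barycentric coordinates `q j` and
`1 - ∑ i, q i`. -/
def cornerReflection (j : Fin m) (q : Fin m → ℝ) : Fin m → ℝ :=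
  Function.update q j (1 - ∑ i, q i)

lemma sum_cornerReflection (j : Fin m) (q : Fin m → ℝ) :
    ∑ i, cornerReflection j q i = 1 - q j := by
  rw [cornerReflection, sum_update_of_mem (mem_univ j), ← add_sum_erase univ q (mem_univ j),
    erase_eq]
  ring

lemma cornerReflection_involutive (j : Fin m) : Function.Involutive (cornerReflection j) := by
  intro q
  rw [cornerReflection, sum_cornerReflection, sub_sub_cancel, cornerReflection,
    Function.update_idem, Function.update_eq_self]

lemma measurePreserving_cornerReflection (j : Fin m) :
    MeasurePreserving (cornerReflection j) := by
  let coord (i : Fin m) : Module.Dual ℝ (Fin m → ℝ) := LinearMap.proj i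
  let f := coord j + ∑ i, coord i
  have hf : ∀ q, f q = q j + ∑ i, q i := fun q => by simp [f, coord]
  have hf2 : f (Pi.single j 1) = 2 := by rw [hf]; simp; norm_num
  have hreflect : cornerReflection j =
      (· + Pi.single j 1) ∘ (Module.reflection hf2 : (Fin m → ℝ) →ₗ[ℝ] (Fin m → ℝ)) := by
    ext q i
    by_cases hi : i = j
    · subst hi
      simp [cornerReflection, Module.reflection_apply, hf]
      ring
    · simp [cornerReflection, Module.reflection_apply, hi]
  rw [hreflect]
  exact (measurePreserving_add_right volume _).comp
    (measurePreserving_of_involutive volume (Module.involutive_reflection hf2))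

lemma cornerReflection_preimage_stdCorner (j : Fin m) :
    cornerReflection j ⁻¹' stdCorner m = stdCorner m := by
  have hmaps : ∀ q ∈ stdCorner m, cornerReflection j q ∈ stdCorner m := by
    refine fun q hq => ⟨fun i => ?_, ?_⟩
    · by_cases hi : i = j
      · simpa [cornerReflection, hi] using hq.2
      · simpa [cornerReflection, hi] using hq.1 i
    · rw [sum_cornerReflection]
      linarith [hq.1 j]
  refine Set.Subset.antisymm (fun q hq => ?_) hmaps
  simpa only [cornerReflection_involutive j q] using hmaps _ hq

lemma setIntegral_comp_cornerReflection (j : Fin m) (g : (Fin m → ℝ) → ℝ) :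
    ∫ q in stdCorner m, g (cornerReflection j q) = ∫ q in stdCorner m, g q := by
  have hmp := measurePreserving_cornerReflection j
  have hemb : MeasurableEmbedding (cornerReflection j) :=
    .of_measurable_inverse hmp.measurable
      ((cornerReflection_involutive j).surjective.range_eq ▸ .univ) hmp.measurable
      (cornerReflection_involutive j).leftInverse
  have h := hmp.setIntegral_preimage_emb hemb g (stdCorner m)
  rwa [cornerReflection_preimage_stdCorner] at h

lemma stdCorner_subset_pi_Icc : stdCorner m ⊆ Set.univ.pi fun _ => Set.Icc 0 1 :=
  fun _ hq i _ => ⟨hq.1 i, (single_le_sum (fun i _ => hq.1 i) (mem_univ i)).trans hq.2⟩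

lemma isCompact_stdCorner : IsCompact (stdCorner m) := by
  refine (isCompact_univ_pi fun _ => isCompact_Icc).of_isClosed_subset ?_ stdCorner_subset_pi_Icc
  simp only [stdCorner, Set.ofPred_and, Set.ofPred_forall]
  exact (isClosed_iInter fun i => isClosed_le (by fun_prop) (by fun_prop)).inter
    (isClosed_le (by fun_prop) (by fun_prop))

lemma continuous_emb (a : ℕ) : Continuous (emb a) := by
  refine continuous_pi fun x => ?_
  unfold emb
  split_ifs <;> fun_prop

lemma emb_castSucc (q : Fin m → ℝ) (i : Fin m) : emb (m + 1) q i.castSucc = q i := by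
  simp [emb]

lemma emb_last (q : Fin m → ℝ) : emb (m + 1) q (Fin.last m) = 1 - ∑ i, q i := by
  simp [emb]

lemma emb_mem_simplex {q : Fin m → ℝ} (hq : q ∈ stdCorner m) : emb (m + 1) q ∈ simplex (m + 1) := by
  constructor
  · refine Fin.lastCases ?_ fun i => ?_
    · simpa [emb_last] using hq.2
    · simpa [emb_castSucc] using hq.1 i
  · simp [Fin.sum_univ_castSucc, emb_castSucc, emb_last]

lemma emb_cornerReflection (j : Fin m) (q : Fin m → ℝ) :
    emb (m + 1) (cornerReflection j q) = emb (m + 1) q ∘ Equiv.swap j.castSucc (Fin.last m) := by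
  funext x
  refine Fin.lastCases ?_ (fun i => ?_) x
  · simp [emb_last, emb_castSucc, sum_cornerReflection]
  · by_cases hi : i = j
    · subst hi
      simp [emb_last, emb_castSucc, cornerReflection]
    · rw [Function.comp_apply, Equiv.swap_apply_of_ne_of_ne (by simpa using hi)
        (Fin.castSucc_lt_last i).ne, emb_castSucc, emb_castSucc, cornerReflection,
        Function.update_of_ne hi]

lemma setIntegral_exp_two_div_sqrt_le {A : ℝ} (hA : 0 < A) :
    ∫ t in Set.Icc (0 : ℝ) 1, rexp 2 / √(1 + A * t) ≤ 2 * rexp 2 / √A := by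
  have hrpow : IntegrableOn (fun t : ℝ => rexp 2 / √A * t ^ (-(1 / 2) : ℝ)) (Set.Ioc 0 1) := by
    rw [← intervalIntegrable_iff_integrableOn_Ioc_of_le zero_le_one]
    exact (intervalIntegral.intervalIntegrable_rpow' (by norm_num)).const_mul _
  have hcont : ContinuousOn (fun t => rexp 2 / √(1 + A * t)) (Set.Icc 0 1) := by
    refine ContinuousOn.div (by fun_prop) (by fun_prop) fun t ht => ?_
    have := ht.1
    positivity
  calc ∫ t in Set.Icc (0 : ℝ) 1, rexp 2 / √(1 + A * t)
      ≤ ∫ t in Set.Ioc (0 : ℝ) 1, rexp 2 / √A * t ^ (-(1 / 2) : ℝ) := by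
        rw [integral_Icc_eq_integral_Ioc]
        refine setIntegral_mono_on (hcont.integrableOn_Icc.mono_set Set.Ioc_subset_Icc_self) hrpow
          measurableSet_Ioc fun t ht => ?_
        have ht0 := ht.1
        rw [rpow_neg ht0.le, ← sqrt_eq_rpow, ← div_eq_mul_inv, div_div, ← sqrt_mul hA.le]
        gcongr
        linarith
    _ = 2 * rexp 2 / √A := by
        rw [← intervalIntegral.integral_of_le zero_le_one, intervalIntegral.integral_const_mul,
          integral_rpow (Or.inl (by norm_num))]
        norm_num
        ring

lemma spread_last_emb (A : ℝ) (q : Fin m → ℝ) :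
    spread A (Fin.last m) (emb (m + 1) q) = ∏ i, rexp 2 / √(1 + A * q i) :=
  (Fintype.prod_equiv (finSuccAboveEquiv (Fin.last m)) (fun i => rexp 2 / √(1 + A * q i)) _
    fun i => by simp [finSuccAboveEquiv_apply, emb_castSucc]).symm

/-- The integrand is a product over the coordinates, so that the corner can be enlarged to the
unit cube. -/
lemma setIntegral_spread_last_le {A : ℝ} (hA : 0 < A) :
    ∫ q in stdCorner m, spread A (Fin.last m) (emb (m + 1) q) ≤ (2 * rexp 2 / √A) ^ m := by
  simp only [spread_last_emb]
  calc ∫ q in stdCorner m, ∏ i, rexp 2 / √(1 + A * q i)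
      ≤ ∫ q in Set.univ.pi fun _ : Fin m => Set.Icc 0 1, ∏ i, rexp 2 / √(1 + A * q i) := by
        refine setIntegral_mono_set (ContinuousOn.integrableOn_compact
          (isCompact_univ_pi fun _ => isCompact_Icc) ?_)
          (Eventually.of_forall fun q => prod_nonneg fun i _ => by positivity)
          stdCorner_subset_pi_Icc.eventuallyLE
        refine continuousOn_finsetProd _ fun i _ =>
          ContinuousOn.div (by fun_prop) (by fun_prop) fun q hq => ?_
        have := (hq i trivial).1
        positivity
    _ = ∏ _i : Fin m, ∫ t in Set.Icc 0 1, rexp 2 / √(1 + A * t) := by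
        rw [volume_pi, Measure.restrict_pi_pi]
        exact integral_fintype_prod_eq_prod fun _ t => rexp 2 / √(1 + A * t)
    _ ≤ (2 * rexp 2 / √A) ^ m := by
        rw [prod_const, card_univ, Fintype.card_fin]
        exact pow_le_pow_left₀ (integral_nonneg fun t => by positivity)
          (setIntegral_exp_two_div_sqrt_le hA) m

lemma setIntegral_spread_le {A : ℝ} (hA : 0 < A) (c : Fin (m + 1)) :
    ∫ q in stdCorner m, spread A c (emb (m + 1) q) ≤ (2 * rexp 2 / √A) ^ m := by
  refine Fin.lastCases (setIntegral_spread_last_le hA) (fun j => ?_) c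
  calc ∫ q in stdCorner m, spread A j.castSucc (emb (m + 1) q)
      = ∫ q in stdCorner m, spread A (Fin.last m) (emb (m + 1) (cornerReflection j q)) := by
        simp only [emb_cornerReflection, spread_comp_perm, Equiv.swap_apply_right]
    _ = ∫ q in stdCorner m, spread A (Fin.last m) (emb (m + 1) q) :=
        setIntegral_comp_cornerReflection j fun q => spread A (Fin.last m) (emb (m + 1) q)
    _ ≤ _ := setIntegral_spread_last_le hA

end Corner

section SimplexVolume

open scoped NNReal

/-- Lebesgue measure on the simplex in the coordinates `q ∈ Δ`. A multiple of it bounds every prior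
with bounded density. -/
def simplexVolume (a : ℕ) : Measure (Fin a → ℝ) :=
  (volume.restrict (stdCorner (a - 1))).map (emb a)

lemma isCompact_simplex (a : ℕ) : IsCompact (simplex a) :=
  isCompact_stdSimplex ℝ (Fin a)

lemma integral_simplexVolume {a : ℕ} {g : (Fin a → ℝ) → ℝ}
    (hg : AEStronglyMeasurable g (simplexVolume a)) :
    ∫ p, g p ∂simplexVolume a = ∫ q in stdCorner (a - 1), g (emb a q) :=
  integral_map (continuous_emb a).aemeasurable hg

lemma ae_simplexVolume_mem_simplex (m : ℕ) : ∀ᵐ p ∂simplexVolume (m + 1), p ∈ simplex (m + 1) := by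
  refine (ae_map_iff (continuous_emb _).aemeasurable (isCompact_simplex _).measurableSet).2 ?_
  filter_upwards [ae_restrict_mem isCompact_stdCorner.measurableSet] with q hq
  exact emb_mem_simplex hq

lemma integrable_of_continuousOn_isCompact {X : Type*} [TopologicalSpace X] [T2Space X]
    [MeasurableSpace X] [OpensMeasurableSpace X] {μ : Measure X} [IsFiniteMeasure μ] {s : Set X}
    {g : X → ℝ} (hg : ContinuousOn g s) (hs : IsCompact s) (hμ : ∀ᵐ x ∂μ, x ∈ s) :
    Integrable g μ := by
  rw [← Measure.restrict_eq_self_of_ae_mem hμ]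
  exact hg.integrableOn_compact hs

variable {a m : ℕ} {M : ℝ≥0}

instance : IsFiniteMeasure (simplexVolume a) := by
  have : IsFiniteMeasure (volume.restrict (stdCorner (a - 1))) :=
    isFiniteMeasure_restrict.2 isCompact_stdCorner.measure_lt_top.ne
  exact Measure.isFiniteMeasure_map _ _

lemma integral_spread_le {μ : Measure (Fin (m + 1) → ℝ)} (hμ : μ ≤ M • simplexVolume (m + 1))
    {A : ℝ} (hA : 0 < A) (c : Fin (m + 1)) :
    ∫ p, spread A c p ∂μ ≤ M * (2 * rexp 2 / √A) ^ m := by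
  have hint : Integrable (spread A c) (simplexVolume (m + 1)) :=
    integrable_of_continuousOn_isCompact ((continuousOn_spread hA.le c).mono fun p hp => hp.1)
      (isCompact_simplex _) (ae_simplexVolume_mem_simplex m)
  calc ∫ p, spread A c p ∂μ
      ≤ ∫ p, spread A c p ∂(M • simplexVolume (m + 1)) :=
        integral_mono_measure hμ (Eventually.of_forall fun _ => spread_nonneg _ _ _)
          hint.smul_measure_nnreal
    _ = M * ∫ q in stdCorner m, spread A c (emb (m + 1) q) := by
        rw [integral_smul_nnreal_measure, integral_simplexVolume hint.1]
        rfl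
    _ ≤ _ := mul_le_mul_of_nonneg_left (setIntegral_spread_le hA c) M.2

lemma IsContDensity.exists_le_smul_simplexVolume {μ : Measure (Fin a → ℝ)} [IsFiniteMeasure μ]
    {f : (Fin (a - 1) → ℝ) → ℝ} (hf : IsContDensity μ f) :
    ∃ M : ℝ≥0, μ ≤ M • simplexVolume a := by
  obtain ⟨hcont, -, -, hdens⟩ := hf
  obtain ⟨M, hM⟩ := isCompact_stdCorner.exists_bound_of_continuousOn hcont
  refine ⟨M.toNNReal, Measure.le_iff.2 fun s hs => ?_⟩
  have hind : Measurable (s.indicator (1 : (Fin a → ℝ) → ℝ)) := measurable_one.indicator hs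
  have hind1 : ∀ p, |s.indicator (1 : (Fin a → ℝ) → ℝ) p| ≤ 1 := fun p => by
    by_cases hp : p ∈ s <;> simp [hp]
  have hint : ∀ h : (Fin (a - 1) → ℝ) → ℝ, IntegrableOn h (stdCorner (a - 1)) →
      IntegrableOn (fun q => s.indicator 1 (emb a q) * h q) (stdCorner (a - 1)) := fun h hh =>
    hh.bdd_mul (hind.comp (continuous_emb a).measurable).aestronglyMeasurable
      (Eventually.of_forall fun q => hind1 _)
  rw [← ENNReal.toReal_le_toReal (measure_ne_top _ _) (measure_ne_top _ _)]
  calc μ.real s = ∫ q in stdCorner (a - 1), s.indicator 1 (emb a q) * f q := by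
        rw [← integral_indicator_one hs, hdens _ hind ⟨1, hind1⟩]
    _ ≤ ∫ q in stdCorner (a - 1), s.indicator 1 (emb a q) * M := by
        refine setIntegral_mono_on (hint f (hcont.integrableOn_compact isCompact_stdCorner))
          (hint _ (integrableOn_const isCompact_stdCorner.measure_lt_top.ne))
          isCompact_stdCorner.measurableSet fun q hq => ?_
        exact mul_le_mul_of_nonneg_left ((le_abs_self _).trans (hM q hq))
          (Set.indicator_nonneg (fun _ _ => zero_le_one) _)
    _ ≤ M.toNNReal * (simplexVolume a).real s := by
        rw [integral_mul_const, ← integral_simplexVolume hind.aestronglyMeasurable,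
          integral_indicator_one hs, mul_comm]
        exact mul_le_mul_of_nonneg_right (le_coe_toNNReal M) measureReal_nonneg
    _ = (M.toNNReal • simplexVolume a).real s := by simp [Measure.real]

end SimplexVolume

section JointLaw

variable {a b n : ℕ} {Q : Matrix (Fin b) (Fin a) ℝ} {μ : Measure (Fin a → ℝ)}

/-- The probability of the data vector `xv`. -/
def wordProb (μ : Measure (Fin a → ℝ)) (xv : Fin n → Fin a) : ℝ :=
  ∫ p, ∏ i, p (xv i) ∂μ

lemma wgt_eq_wordProb_mul (Q : Matrix (Fin b) (Fin a) ℝ) (μ : Measure (Fin a → ℝ))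
    (xv : Fin n → Fin a) (y : Fin n → Fin b) :
    wgt Q μ xv y = wordProb μ xv * ∏ i, Q (y i) (xv i) := by
  simp only [wgt, wordProb, prod_mul_distrib, integral_mul_const]

lemma wordProb_nonneg (hμ : ∀ᵐ p ∂μ, p ∈ simplex a) (xv : Fin n → Fin a) : 0 ≤ wordProb μ xv :=
  integral_nonneg_of_ae (hμ.mono fun _ hp => prod_nonneg fun _ _ => hp.1 _)

lemma wgt_nonneg (hμ : ∀ᵐ p ∂μ, p ∈ simplex a) (hQ : ∀ y x, 0 ≤ Q y x) (xv : Fin n → Fin a)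
    (y : Fin n → Fin b) : 0 ≤ wgt Q μ xv y := by
  rw [wgt_eq_wordProb_mul]
  exact mul_nonneg (wordProb_nonneg hμ xv) (prod_nonneg fun i _ => hQ _ _)

lemma sum_prod_channel (hQcol : ∀ x, ∑ y, Q y x = 1) (xv : Fin n → Fin a) :
    ∑ y : Fin n → Fin b, ∏ i, Q (y i) (xv i) = 1 := by
  calc ∑ y : Fin n → Fin b, ∏ i, Q (y i) (xv i) = ∏ i, ∑ y, Q y (xv i) := by
        rw [prod_univ_sum, Fintype.piFinset_univ]
    _ = 1 := prod_eq_one fun i _ => hQcol _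

lemma sum_lik (hQcol : ∀ x, ∑ y, Q y x = 1) {p : Fin a → ℝ} (hp : p ∈ simplex a) :
    ∑ y : Fin n → Fin b, lik Q y p = 1 := by
  have hmass : ∑ y, (Q *ᵥ p) y = 1 := by
    simp only [mulVec, dotProduct]
    rw [sum_comm, ← hp.2]
    exact sum_congr rfl fun x _ => by rw [← sum_mul, hQcol, one_mul]
  simp only [lik]
  rw [← Fintype.sum_pow, hmass, one_pow]

lemma lik_eq_prod_sum (Q : Matrix (Fin b) (Fin a) ℝ) (y : Fin n → Fin b) (p : Fin a → ℝ) :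
    lik Q y p = ∏ i, ∑ x, p x * Q (y i) x := by
  simp only [lik, mulVec, dotProduct, mul_comm]

lemma continuous_lik (Q : Matrix (Fin b) (Fin a) ℝ) (y : Fin n → Fin b) :
    Continuous (lik Q y) := by
  simp only [funext (lik_eq_prod_sum Q y)]
  fun_prop

lemma integrable_of_continuousOn_simplex [IsFiniteMeasure μ] (hμ : ∀ᵐ p ∂μ, p ∈ simplex a)
    {g : (Fin a → ℝ) → ℝ} (hg : ContinuousOn g (simplex a)) : Integrable g μ :=
  integrable_of_continuousOn_isCompact hg (isCompact_simplex a) hμ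

lemma sum_wordProb [IsProbabilityMeasure μ] (hμ : ∀ᵐ p ∂μ, p ∈ simplex a) :
    ∑ xv : Fin n → Fin a, wordProb μ xv = 1 := by
  simp only [wordProb]
  rw [← integral_finsetSum _ fun xv _ => integrable_of_continuousOn_simplex hμ (by fun_prop),
    integral_congr_ae (g := fun _ => 1) (hμ.mono fun p hp => by
      simp only [← Fintype.sum_pow, hp.2, one_pow])]
  simp

lemma sum_wgt [IsProbabilityMeasure μ] (hμ : ∀ᵐ p ∂μ, p ∈ simplex a)
    (hQcol : ∀ x, ∑ y, Q y x = 1) :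
    ∑ y : Fin n → Fin b, ∑ xv : Fin n → Fin a, wgt Q μ xv y = 1 := by
  rw [sum_comm]
  simp only [wgt_eq_wordProb_mul, ← mul_sum, sum_prod_channel hQcol, mul_one]
  exact sum_wordProb hμ

lemma fiberMass_wgt {ι : Type*} [IsFiniteMeasure μ] (hμ : ∀ᵐ p ∂μ, p ∈ simplex a)
    (y : Fin n → Fin b) (T : (Fin n → Fin a) → ι) (k : ι) :
    fiberMass (fun xv => wgt Q μ xv y) T k =
      ∫ p, fiberMass (fun xv => ∏ i, p (xv i) * Q (y i) (xv i)) T k ∂μ :=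
  (integral_finsetSum _ fun xv _ => integrable_of_continuousOn_simplex hμ (by fun_prop)).symm

end JointLaw

section Frequencies

variable {a b n : ℕ} {Q : Matrix (Fin b) (Fin a) ℝ} {μ : Measure (Fin a → ℝ)}

lemma Pphi_eq_fiberMass (Q : Matrix (Fin b) (Fin a) ℝ) (μ : Measure (Fin a → ℝ)) (φ : Fin a → ℝ)
    (y : Fin n → Fin b) : Pphi Q μ φ y = fiberMass (fun xv => wgt Q μ xv y) freqVec φ := by
  unfold Pphi fiberMass
  congr!

lemma HFcond_eq_condEntropy (Q : Matrix (Fin b) (Fin a) ℝ) (μ : Measure (Fin a → ℝ)) (n : ℕ) :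
    HFcond Q μ n =
      condEntropy (fun (y : Fin n → Fin b) (xv : Fin n → Fin a) => wgt Q μ xv y) freqVec := by
  classical
  have hmass : ∀ y : Fin n → Fin b, ∑ φ ∈ univ.image (freqVec (a := a) (n := n)),
      fiberMass (fun xv => wgt Q μ xv y) freqVec φ = ∑ xv : Fin n → Fin a, wgt Q μ xv y := by
    intro y
    have h := sum_image_fiberMass_mul (fun xv : Fin n → Fin a => wgt Q μ xv y) freqVec 1
    simpa only [Pi.one_apply, mul_one] using h
  unfold HFcond condEntropy
  simp only [Pphi_eq_fiberMass]
  refine congrArg Neg.neg (sum_congr rfl fun y _ => ?_)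
  rw [← hmass y, ← sum_image_fiberMass_mul (fun xv => wgt Q μ xv y) freqVec fun φ =>
    log (fiberMass (fun xv => wgt Q μ xv y) freqVec φ / _)]

lemma freqVec_eq_iff {xv xv' : Fin n → Fin a} (c : Fin a) :
    freqVec xv = freqVec xv' ↔ countsOff c xv = countsOff c xv' := by
  rw [countsOff_eq_iff, funext_iff]
  refine forall_congr' fun x => ?_
  rcases n.eq_zero_or_pos with rfl | hn
  · simp [freqVec]
  · simp [freqVec, div_left_inj', hn.ne']

lemma HFcond_eq_condEntropy_countsOff (Q : Matrix (Fin b) (Fin a) ℝ) (μ : Measure (Fin a → ℝ))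
    (n : ℕ) (c : Fin a) :
    HFcond Q μ n = condEntropy (fun (y : Fin n → Fin b) xv => wgt Q μ xv y) (countsOff c) :=
  (HFcond_eq_condEntropy Q μ n).trans (condEntropy_congr _ fun _ _ => freqVec_eq_iff c)

end Frequencies

section EntropyLower

variable {a b n : ℕ} {Q : Matrix (Fin b) (Fin a) ℝ} {μ : Measure (Fin a → ℝ)} {δ : ℝ}

lemma exists_inv_card_le_of_mem_simplex {p : Fin a → ℝ} (hp : p ∈ simplex a) :
    ∃ c, (a : ℝ)⁻¹ ≤ p c := by
  have : Nonempty (Fin a) := by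
    by_contra h
    rw [not_nonempty_iff] at h
    simpa using hp.2
  have ha : (a : ℝ) ≠ 0 := by
    have := Fintype.card_pos (α := Fin a)
    rw [Fintype.card_fin] at this
    positivity
  obtain ⟨c, -, hc⟩ := exists_le_of_sum_le (s := (univ : Finset (Fin a))) univ_nonempty
    (f := fun _ => (a : ℝ)⁻¹) (g := p) (by simp [hp.2, ha])
  exact ⟨c, hc⟩

lemma fiberMass_freqVec_le (hδ : 0 ≤ δ) (hδQ : ∀ y x, δ ≤ Q y x) (hQcol : ∀ x, ∑ y, Q y x = 1)
    {p : Fin a → ℝ} (hp : p ∈ simplex a) (y : Fin n → Fin b) (xv : Fin n → Fin a) :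
    fiberMass (fun xv => ∏ i, p (xv i) * Q (y i) (xv i)) freqVec (freqVec xv) ≤
      lik Q y p * ∑ c, spread (n * (δ ^ 2 * (a : ℝ)⁻¹)) c p := by
  have hQ1 : ∀ y x, Q y x ≤ 1 := fun y x => by
    rw [← hQcol x]
    exact single_le_sum (fun y _ => hδ.trans (hδQ y x)) (mem_univ y)
  have hlik : 0 ≤ lik Q y p := by
    rw [lik_eq_prod_sum]
    exact prod_nonneg fun i _ => sum_nonneg fun x _ =>
      mul_nonneg (hp.1 x) (hδ.trans (hδQ _ _))
  obtain ⟨c, hc⟩ := exists_inv_card_le_of_mem_simplex hp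
  calc fiberMass (fun xv => ∏ i, p (xv i) * Q (y i) (xv i)) freqVec (freqVec xv)
      = fiberMass (fun xv => ∏ i, p (xv i) * Q (y i) (xv i)) (countsOff c) (countsOff c xv) :=
        fiberMass_congr _ (fun _ _ => freqVec_eq_iff c) xv
    _ ≤ (∏ i, ∑ x, p x * Q (y i) x) * spread (Fintype.card (Fin n) * (δ ^ 2 * (a : ℝ)⁻¹)) c p :=
        fiberMass_countsOff_le hp.1 hp.2 hδ (by positivity) hc (fun i x => hδQ (y i) x)
          (fun i x => hQ1 (y i) x) _
    _ ≤ lik Q y p * ∑ c, spread (n * (δ ^ 2 * (a : ℝ)⁻¹)) c p := by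
        rw [Fintype.card_fin, ← lik_eq_prod_sum]
        exact mul_le_mul_of_nonneg_left
          (single_le_sum (fun c _ => spread_nonneg _ c p) (mem_univ c)) hlik

lemma neg_log_le_HFcond [IsProbabilityMeasure μ] (hμ : ∀ᵐ p ∂μ, p ∈ simplex a) (hδ : 0 ≤ δ)
    (hδQ : ∀ y x, δ ≤ Q y x) (hQcol : ∀ x, ∑ y, Q y x = 1) {B : ℝ}
    (hB : ∑ c, ∫ p, spread (n * (δ ^ 2 * (a : ℝ)⁻¹)) c p ∂μ ≤ B) : -log B ≤ HFcond Q μ n := by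
  set A : ℝ := n * (δ ^ 2 * (a : ℝ)⁻¹)
  have hcont : ∀ c, ContinuousOn (spread A c) (simplex a) := fun c =>
    (continuousOn_spread (by positivity) c).mono fun p hp => hp.1
  have hlik : ∀ y : Fin n → Fin b, Integrable (fun p => lik Q y p * ∑ c, spread A c p) μ :=
    fun y => integrable_of_continuousOn_simplex hμ
      ((continuous_lik Q y).continuousOn.mul (continuousOn_finsetSum _ fun c _ => hcont c))
  rw [HFcond_eq_condEntropy]
  refine neg_log_le_condEntropy
    (fun y xv => wgt_nonneg hμ (fun y x => hδ.trans (hδQ y x)) xv y) (sum_wgt hμ hQcol)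
    (β := fun y => ∫ p, lik Q y p * ∑ c, spread A c p ∂μ) (fun y xv => ?_) (le_of_eq_of_le ?_ hB)
  · rw [fiberMass_wgt hμ]
    refine integral_mono_ae (integrable_of_continuousOn_simplex hμ ?_) (hlik y)
      (hμ.mono fun p hp => fiberMass_freqVec_le hδ hδQ hQcol hp y xv)
    unfold fiberMass
    fun_prop
  · rw [← integral_finsetSum _ fun y _ => hlik y,
      ← integral_finsetSum _ fun c _ => integrable_of_continuousOn_simplex hμ (hcont c)]
    exact integral_congr_ae (hμ.mono fun p hp => by
      simp only [← sum_mul, sum_lik hQcol hp, one_mul])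

end EntropyLower

section EntropyPower
open scoped NNReal

lemma exp_two_div_mul_neg_log_mul_pow {K r : ℝ} (hK : 0 < K) (hr : 0 < r) {m : ℕ} (hm : m ≠ 0) :
    rexp (2 / m * -log (K * r ^ m)) = K ^ (-(2 / (m : ℝ))) / r ^ 2 := by
  have hexponent : 2 / (m : ℝ) * -log (K * r ^ m) = log K * -(2 / (m : ℝ)) - log (r ^ 2) := by
    rw [log_mul hK.ne' (by positivity), log_pow, log_pow]
    field_simp
    push_cast
    ring
  rw [hexponent, exp_sub, exp_log (by positivity), ← rpow_def_of_pos hK]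

lemma ae_mem_simplex_of_le_smul_simplexVolume {m : ℕ} {μ : Measure (Fin (m + 1) → ℝ)} {M : ℝ≥0}
    (hμ : μ ≤ M • simplexVolume (m + 1)) : ∀ᵐ p ∂μ, p ∈ simplex (m + 1) :=
  (Measure.absolutelyContinuous_of_le_smul (c := M) hμ).ae_le (ae_simplexVolume_mem_simplex m)

lemma exists_mul_le_exp_HFcond {m b : ℕ} (hm : m ≠ 0) {Q : Matrix (Fin b) (Fin (m + 1)) ℝ}
    (hQ : ∀ y x, 0 < Q y x) (hQcol : ∀ x, ∑ y, Q y x = 1)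
    {μ : Measure (Fin (m + 1) → ℝ)} [IsProbabilityMeasure μ] {M : ℝ≥0}
    (hμ : μ ≤ M • simplexVolume (m + 1)) :
    ∃ c : ℝ, 0 < c ∧ ∀ n : ℕ, 0 < n → c * n ≤ rexp (2 / m * HFcond Q μ n) := by
  have hM : 0 < M := pos_iff_ne_zero.2 fun h => IsProbabilityMeasure.ne_zero μ <|
    Measure.measure_univ_eq_zero.1 <| le_antisymm (by simpa [h] using hμ Set.univ) zero_le
  have : Nonempty (Fin b) := (nonempty_of_sum_ne_zero ((hQcol 0).trans_ne one_ne_zero)).to_type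
  obtain ⟨⟨y₀, x₀⟩, hmin⟩ := Finite.exists_min fun z : Fin b × Fin (m + 1) => Q z.1 z.2
  set δ := Q y₀ x₀
  have hδ : 0 < δ := hQ y₀ x₀
  set κ : ℝ := δ ^ 2 * ((m + 1 : ℕ) : ℝ)⁻¹
  set K : ℝ := (m + 1 : ℕ) * M
  have hκ : 0 < κ := by positivity
  have hK : 0 < K := by positivity
  refine ⟨K ^ (-(2 / (m : ℝ))) * κ / (2 * rexp 2) ^ 2, by positivity, fun n hn => ?_⟩
  set r := 2 * rexp 2 / √(n * κ) with hr
  have hentropy : -log (K * r ^ m) ≤ HFcond Q μ n := by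
    refine neg_log_le_HFcond (ae_mem_simplex_of_le_smul_simplexVolume hμ) hδ.le
      (fun y x => hmin (y, x)) hQcol
      ((sum_le_card_nsmul _ _ _ fun c _ => integral_spread_le hμ (by positivity) c).trans_eq ?_)
    rw [card_univ, Fintype.card_fin, nsmul_eq_mul, ← mul_assoc]
  calc K ^ (-(2 / (m : ℝ))) * κ / (2 * rexp 2) ^ 2 * n
      = K ^ (-(2 / (m : ℝ))) / r ^ 2 := by
        rw [hr, div_pow, sq_sqrt (by positivity)]; field_simp
    _ = rexp (2 / m * -log (K * r ^ m)) :=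
        (exp_two_div_mul_neg_log_mul_pow hK (by positivity) hm).symm
    _ ≤ _ := exp_le_exp.2 (mul_le_mul_of_nonneg_left hentropy (by positivity))

end EntropyPower

section PosteriorMean

lemma sum_mul_sq_sub_weightedMean_le {Ω : Type*} [Fintype Ω] {w : Ω → ℝ} (hw : ∀ ω, 0 ≤ w ω)
    (g : Ω → ℝ) (e : ℝ) :
    ∑ ω, w ω * (g ω - (∑ ω, w ω * g ω) / ∑ ω, w ω) ^ 2 ≤ ∑ ω, w ω * (g ω - e) ^ 2 := by
  set W := ∑ ω, w ω with hW
  set m := (∑ ω, w ω * g ω) / W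
  rcases (sum_nonneg fun ω _ => hw ω : 0 ≤ W).eq_or_lt with hW0 | hW0
  · have hzero : ∀ ω, w ω = 0 := fun ω =>
      (sum_eq_zero_iff_of_nonneg fun ω _ => hw ω).1 hW0.symm ω (mem_univ ω)
    simp [hzero]
  · have hmean : ∑ ω, w ω * (g ω - m) = 0 := by
      have hWm : W * m = ∑ ω, w ω * g ω := mul_div_cancel₀ _ hW0.ne'
      simp only [mul_sub, sum_sub_distrib, ← sum_mul, ← hW, hWm, sub_self]
    have hdecomp : ∑ ω, w ω * (g ω - e) ^ 2 =
        ∑ ω, w ω * (g ω - m) ^ 2 + 2 * (m - e) * ∑ ω, w ω * (g ω - m) + W * (m - e) ^ 2 := by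
      rw [hW, mul_sum, sum_mul, ← sum_add_distrib, ← sum_add_distrib]
      exact sum_congr rfl fun ω _ => by ring
    rw [hdecomp, hmean, mul_zero, add_zero]
    exact le_add_of_nonneg_right (mul_nonneg hW0.le (sq_nonneg _))

end PosteriorMean

section CoordinateError

variable {a b n : ℕ} {Q : Matrix (Fin b) (Fin a) ℝ} {μ : Measure (Fin a → ℝ)}

/-- The contribution of coordinate `α` to the mean squared error `MSEfreq Q μ Est`. -/
def coordMSE (Q : Matrix (Fin b) (Fin a) ℝ) (μ : Measure (Fin a → ℝ))
    (Est : (Fin n → Fin b) → Fin a → ℝ) (α : Fin a) : ℝ :=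
  ∑ y, ∑ xv, wgt Q μ xv y * (freqVec xv α - Est y α) ^ 2

lemma sum_coordMSE (Q : Matrix (Fin b) (Fin a) ℝ) (μ : Measure (Fin a → ℝ))
    (Est : (Fin n → Fin b) → Fin a → ℝ) : ∑ α, coordMSE Q μ Est α = MSEfreq Q μ Est := by
  simp only [coordMSE, MSEfreq, mul_sum]
  rw [sum_comm, sum_comm (γ := Fin n → Fin a)]
  exact sum_congr rfl fun y _ => sum_comm

lemma MSEfreq_PhiOpt_le (hμ : ∀ᵐ p ∂μ, p ∈ simplex a) (hQ : ∀ y x, 0 ≤ Q y x)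
    (Est : (Fin n → Fin b) → Fin a → ℝ) : MSEfreq (n := n) Q μ (PhiOpt Q μ) ≤ MSEfreq Q μ Est := by
  rw [← sum_coordMSE, ← sum_coordMSE]
  exact sum_le_sum fun α _ => sum_le_sum fun y _ =>
    sum_mul_sq_sub_weightedMean_le (fun xv => wgt_nonneg hμ hQ xv y) _ _

lemma countsOff_eq_mul_freqVec (c : Fin a) (xv : Fin n → Fin a) (x : {x // x ≠ c}) :
    (countsOff c xv x : ℝ) = n * freqVec xv x := by
  rcases n.eq_zero_or_pos with rfl | hn
  · simp [countsOff]
  · simp [countsOff, freqVec, mul_div_cancel₀, hn.ne']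

lemma sum_wgt_mul_sum_sq_countsOff (Q : Matrix (Fin b) (Fin a) ℝ) (μ : Measure (Fin a → ℝ))
    (Est : (Fin n → Fin b) → Fin a → ℝ) (c : Fin a) :
    ∑ y, ∑ xv, wgt Q μ xv y * ∑ x : {x // x ≠ c}, ((countsOff c xv x : ℝ) - n * Est y x) ^ 2 =
      n ^ 2 * (MSEfreq Q μ Est - coordMSE Q μ Est c) := by
  simp only [← sum_coordMSE, Fintype.sum_eq_add_sum_subtype_ne _ c, add_sub_cancel_left, coordMSE,
    countsOff_eq_mul_freqVec, ← mul_sub, mul_pow, mul_sum]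
  symm
  rw [sum_comm]
  refine sum_congr rfl fun y _ => ?_
  rw [sum_comm]
  exact sum_congr rfl fun xv _ => sum_congr rfl fun x _ => mul_left_comm _ _ _

lemma exp_HFcond_le [IsProbabilityMeasure μ] (ha : 2 ≤ a) (hμ : ∀ᵐ p ∂μ, p ∈ simplex a)
    (hQ : ∀ y x, 0 ≤ Q y x) (hQcol : ∀ x, ∑ y, Q y x = 1) (Est : (Fin n → Fin b) → Fin a → ℝ) :
    rexp (2 / (a - 1) * HFcond Q μ n) ≤
      2 * π * rexp 1 * (n ^ 2 * MSEfreq Q μ Est / a + 1 / 12) := by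
  have ha1 : (0 : ℝ) < a - 1 := by
    have : (2 : ℝ) ≤ a := by exact_mod_cast ha
    linarith
  obtain ⟨c, -, hc⟩ : ∃ c ∈ univ, MSEfreq Q μ Est / a ≤ coordMSE Q μ Est c :=
    exists_le_of_sum_le ⟨⟨0, by omega⟩, mem_univ _⟩ (by
      rw [sum_coordMSE, sum_const, card_univ, Fintype.card_fin, nsmul_eq_mul,
        mul_div_cancel₀ _ (by positivity)])
  have hcard : (Fintype.card {x // x ≠ c} : ℝ) = a - 1 := by
    rw [Fintype.card_subtype_compl, Fintype.card_subtype_eq, Fintype.card_fin,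
      Nat.cast_pred (by omega)]
  have : Nonempty {x // x ≠ c} := Fintype.card_pos_iff.1 (by exact_mod_cast hcard ▸ ha1)
  rw [HFcond_eq_condEntropy_countsOff Q μ n c, ← hcard]
  refine (exp_condEntropy_le (fun y xv => wgt_nonneg hμ hQ xv y) (sum_wgt hμ hQcol) (countsOff c)
    fun y x => n * Est y x).trans ?_
  rw [sum_wgt_mul_sum_sq_countsOff, hcard]
  gcongr ?_ * (?_ + 1 / 12)
  rw [div_le_iff₀ (by positivity)] at hc
  rw [div_le_div_iff₀ ha1 (by positivity)]
  linarith [mul_le_mul_of_nonneg_left hc (sq_nonneg (n : ℝ))]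

end CoordinateError

section UnbiasedEstimator

lemma sum_pi_prod_mul_sq_sum {ι β : Type*} [Fintype ι] [DecidableEq ι] [Fintype β]
    {q v : ι → β → ℝ} (hq : ∀ i, ∑ b, q i b = 1) (hv : ∀ i, ∑ b, q i b * v i b = 0) :
    ∑ y : ι → β, (∏ i, q i (y i)) * (∑ i, v i (y i)) ^ 2 = ∑ i, ∑ b, q i b * v i b ^ 2 := by
  have hfactor : ∀ i j, ∑ y : ι → β, (∏ k, q k (y k)) * (v i (y i) * v j (y j)) =
      ∏ k, ∑ b, q k b * ((if k = i then v k b else 1) * if k = j then v k b else 1) := fun i j => by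
    rw [prod_univ_sum, Fintype.piFinset_univ]
    refine sum_congr rfl fun y _ => ?_
    simp only [prod_mul_distrib, prod_ite_eq', mem_univ, if_true]
  have hcross : ∀ i j, j ≠ i → ∑ y : ι → β, (∏ k, q k (y k)) * (v i (y i) * v j (y j)) = 0 :=
    fun i j hij => by
      rw [hfactor]
      exact prod_eq_zero (mem_univ i) (by simp [hij.symm, hv])
  have hdiag : ∀ i, ∑ y : ι → β, (∏ k, q k (y k)) * (v i (y i) * v i (y i)) =
      ∑ b, q i b * v i b ^ 2 := fun i => by
    rw [hfactor, prod_eq_single i (fun k _ hk => by simp [hk, hq]) (by simp)]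
    simp [sq]
  calc ∑ y : ι → β, (∏ i, q i (y i)) * (∑ i, v i (y i)) ^ 2
      = ∑ y : ι → β, ∑ i, ∑ j, (∏ k, q k (y k)) * (v i (y i) * v j (y j)) :=
        sum_congr rfl fun y _ => by
          rw [sq, sum_mul_sum]
          simp only [mul_sum]
    _ = ∑ i, ∑ j, ∑ y : ι → β, (∏ k, q k (y k)) * (v i (y i) * v j (y j)) := by
        rw [sum_comm]
        exact sum_congr rfl fun i _ => sum_comm
    _ = ∑ i, ∑ b, q i b * v i b ^ 2 := sum_congr rfl fun i _ => by
        rw [sum_eq_single i (fun j _ => hcross i j) (by simp), hdiag]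

lemma exists_mul_eq_one_of_rank_eq {K m n : Type*} [Field K] [Fintype m] [Fintype n]
    [DecidableEq n] {Q : Matrix m n K} (hrank : Q.rank = Fintype.card n) :
    ∃ A : Matrix n m K, A * Q = 1 := by
  have hrange : Qᵀ.mulVecLin.range = ⊤ :=
    Submodule.eq_top_of_finrank_eq (by rw [← rank, rank_transpose, hrank, Module.finrank_pi])
  refine vecMul_surjective_iff_exists_left_inverse.1 fun v => ?_
  obtain ⟨u, hu⟩ := LinearMap.range_eq_top.1 hrange v
  exact ⟨u, by rwa [mulVecLin_apply, mulVec_transpose] at hu⟩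

variable {a b n : ℕ} {Q : Matrix (Fin b) (Fin a) ℝ} {μ : Measure (Fin a → ℝ)}

lemma coordMSE_eq_sum_wordProb_mul (Q : Matrix (Fin b) (Fin a) ℝ) (μ : Measure (Fin a → ℝ))
    (Est : (Fin n → Fin b) → Fin a → ℝ) (α : Fin a) :
    coordMSE Q μ Est α = ∑ xv, wordProb μ xv *
      ∑ y, (∏ i, Q (y i) (xv i)) * (freqVec xv α - Est y α) ^ 2 := by
  simp only [coordMSE, wgt_eq_wordProb_mul, mul_assoc, mul_sum]
  exact sum_comm

lemma sum_prod_channel_mul_sq_unbiased (hQcol : ∀ x, ∑ y, Q y x = 1)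
    {A : Matrix (Fin a) (Fin b) ℝ} (hA : A * Q = 1) (xv : Fin n → Fin a) (α : Fin a) :
    ∑ y : Fin n → Fin b, (∏ i, Q (y i) (xv i)) * (freqVec xv α - (∑ i, A α (y i)) / n) ^ 2 =
      (∑ i, ∑ y, Q y (xv i) * ((if xv i = α then 1 else 0) - A α y) ^ 2) / n ^ 2 := by
  have hmean : ∀ i, ∑ y, Q y (xv i) * ((if xv i = α then 1 else 0) - A α y) = 0 := fun i => by
    have hone : ∑ y, A α y * Q y (xv i) = if xv i = α then 1 else 0 := by
      rw [← mul_apply, hA, one_apply]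
      simp only [eq_comm]
    simp only [mul_sub, sum_sub_distrib, ← sum_mul, hQcol, one_mul, mul_comm (Q _ _) (A _ _), hone,
      sub_self]
  rw [← sum_pi_prod_mul_sq_sum (q := fun i y => Q y (xv i)) (fun i => hQcol _) hmean, sum_div]
  refine sum_congr rfl fun y _ => ?_
  rw [sum_sub_distrib, sum_boole, freqVec, ← sub_div, div_pow, mul_div_assoc]

lemma coordMSE_unbiased_le [IsProbabilityMeasure μ] (hμ : ∀ᵐ p ∂μ, p ∈ simplex a)
    (hQ : ∀ y x, 0 ≤ Q y x) (hQcol : ∀ x, ∑ y, Q y x = 1) {A : Matrix (Fin a) (Fin b) ℝ}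
    (hA : A * Q = 1) (hn : 0 < n) (α : Fin a) :
    coordMSE Q μ (fun (y : Fin n → Fin b) α => (∑ i, A α (y i)) / n) α ≤
      (∑ x, ∑ y, Q y x * ((if x = α then 1 else 0) - A α y) ^ 2) / n := by
  set V : Fin a → ℝ := fun x => ∑ y, Q y x * ((if x = α then 1 else 0) - A α y) ^ 2
  have hV : ∀ x, V x ≤ ∑ x, V x := fun x => single_le_sum (f := V)
    (fun x _ => sum_nonneg fun y _ => mul_nonneg (hQ y x) (sq_nonneg _)) (mem_univ x)
  rw [coordMSE_eq_sum_wordProb_mul, ← one_mul (_ / (n : ℝ)), ← sum_wordProb (n := n) hμ, sum_mul]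
  refine sum_le_sum fun xv _ => mul_le_mul_of_nonneg_left ?_ (wordProb_nonneg hμ xv)
  calc _ = (∑ i, V (xv i)) / n ^ 2 := sum_prod_channel_mul_sq_unbiased hQcol hA xv α
    _ ≤ (n * ∑ x, V x) / n ^ 2 := by
        gcongr
        exact (sum_le_card_nsmul _ _ _ fun i _ => hV _).trans_eq (by simp)
    _ = (∑ x, V x) / n := by field_simp

lemma exists_MSEfreq_PhiOpt_le_div [IsProbabilityMeasure μ] (hμ : ∀ᵐ p ∂μ, p ∈ simplex a)
    (hQ : ∀ y x, 0 ≤ Q y x) (hQcol : ∀ x, ∑ y, Q y x = 1) (hrank : Q.rank = a) :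
    ∃ C : ℝ, 0 ≤ C ∧ ∀ n : ℕ, 0 < n → MSEfreq (n := n) Q μ (PhiOpt Q μ) ≤ C / n := by
  obtain ⟨A, hA⟩ := exists_mul_eq_one_of_rank_eq (hrank.trans (Fintype.card_fin a).symm)
  refine ⟨∑ α, ∑ x, ∑ y, Q y x * ((if x = α then 1 else 0) - A α y) ^ 2, ?_, fun n hn => ?_⟩
  · exact sum_nonneg fun α _ => sum_nonneg fun x _ => sum_nonneg fun y _ =>
      mul_nonneg (hQ y x) (sq_nonneg _)
  · refine (MSEfreq_PhiOpt_le hμ hQ fun y α => (∑ i, A α (y i)) / n).trans ?_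
    rw [← sum_coordMSE, sum_div]
    exact sum_le_sum fun α _ => coordMSE_unbiased_le hμ hQ hQcol hA hn α

end UnbiasedEstimator

section EntropyBound
open scoped NNReal

lemma one_le_liminf_div_of_tendsto_atTop {ι : Type*} {l : Filter ι} [l.NeBot] {X E : ι → ℝ}
    {B D : ℝ} (hE : Tendsto E l atTop) (hEX : ∀ᶠ i in l, E i ≤ X i + B)
    (hXE : ∀ᶠ i in l, X i ≤ D * E i) :
    1 ≤ liminf (fun i => X i / E i) l := by
  have hpos : ∀ᶠ i in l, 0 < E i := hE.eventually_gt_atTop 0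
  have hlim : Tendsto (fun i => 1 - B / E i) l (nhds 1) := by
    simpa using (hE.const_div_atTop B).const_sub 1
  have hlower : ∀ᶠ i in l, 1 - B / E i ≤ X i / E i := by
    filter_upwards [hpos, hEX] with i hi h
    rw [one_sub_div hi.ne']
    gcongr
    linarith
  have hupper : ∀ᶠ i in l, X i / E i ≤ D := by
    filter_upwards [hpos, hXE] with i hi h using (div_le_iff₀ hi).2 h
  rw [← hlim.liminf_eq]
  exact liminf_le_liminf hlower hlim.isBoundedUnder_ge
    (isBoundedUnder_of_eventually_le hupper).isCoboundedUnder_ge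

theorem MSEfreq_liminf_entropy_bound_general {a b : ℕ} (ha : 2 ≤ a)
    (Q : Matrix (Fin b) (Fin a) ℝ)
    (hQpos : ∀ y x, 0 < Q y x) (hQcol : ∀ x, ∑ y, Q y x = 1)
    (μ : Measure (Fin a → ℝ)) [IsProbabilityMeasure μ]
    (hrank : Q.rank = a) (M : ℝ≥0) (hμ : μ ≤ M • simplexVolume a) :
    1 ≤ Filter.liminf (fun n : ℕ =>
      MSEfreq (n := n) Q μ (PhiOpt Q μ) /
        ((a : ℝ) / (2 * π * Real.exp 1 * (n : ℝ) ^ 2) *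
          Real.exp ((2 / ((a : ℝ) - 1)) * HFcond Q μ n))) Filter.atTop := by
  obtain ⟨m, rfl⟩ : ∃ m, a = m + 1 := ⟨a - 1, by omega⟩
  have hsimplex := ae_mem_simplex_of_le_smul_simplexVolume hμ
  have hQ : ∀ y x, 0 ≤ Q y x := fun y x => (hQpos y x).le
  obtain ⟨c, hc, hpower⟩ := exists_mul_le_exp_HFcond (by omega) hQpos hQcol hμ
  obtain ⟨C, hC, herror⟩ := exists_MSEfreq_PhiOpt_le_div hsimplex hQ hQcol hrank
  set A : ℝ := ((m + 1 : ℕ) : ℝ) with hA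
  rw [show (m : ℝ) = A - 1 by rw [hA]; push_cast; ring] at hpower
  set K := 2 * π * rexp 1
  set E : ℕ → ℝ := fun n => rexp (2 / (A - 1) * HFcond Q μ n)
  set X : ℕ → ℝ := fun n => K * (n ^ 2 * MSEfreq (n := n) Q μ (PhiOpt Q μ) / A)
  have hE : Tendsto E atTop atTop := tendsto_atTop_mono' _
    ((eventually_gt_atTop 0).mono hpower) (tendsto_natCast_atTop_atTop.const_mul_atTop hc)
  have hEX : ∀ n, E n ≤ X n + K / 12 := fun n =>
    (exp_HFcond_le ha hsimplex hQ hQcol (PhiOpt Q μ)).trans_eq (by ring)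
  have hXE : ∀ n > 0, X n ≤ K * C / (A * c) * E n := fun n hn => by
    calc X n ≤ K * (n ^ 2 * (C / n) / A) := by simp only [X]; gcongr; exact herror n hn
      _ = K * C / (A * c) * (c * n) := by field_simp
      _ ≤ _ := by gcongr; exact hpower n hn
  refine (one_le_liminf_div_of_tendsto_atTop hE (.of_forall hEX)
    ((eventually_gt_atTop 0).mono hXE)).trans_eq (congrArg (liminf · atTop) (funext fun n => ?_))
  simp only [X, E, div_mul_eq_mul_div (A : ℝ), div_div_eq_mul_div]
  ring

end EntropyBound

/-- asymptotic entropy lower bound on the optimal MSE for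
frequency estimation. -/
theorem MSEfreq_liminf_entropy_bound {a b : ℕ} (ha : 2 ≤ a) (hb : 2 ≤ b)
    (Q : Matrix (Fin b) (Fin a) ℝ)
    (hQpos : ∀ y x, 0 < Q y x) (hQcol : ∀ x, ∑ y, Q y x = 1)
    (μ : Measure (Fin a → ℝ)) [IsProbabilityMeasure μ]
    (hrank : Q.rank = a)
    (f : (Fin (a - 1) → ℝ) → ℝ) (hf : IsContDensity μ f) :
    1 ≤ Filter.liminf (fun n : ℕ =>
      MSEfreq (n := n) Q μ (PhiOpt Q μ) /
        ((a : ℝ) / (2 * π * Real.exp 1 * (n : ℝ) ^ 2) *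
          Real.exp ((2 / ((a : ℝ) - 1)) * HFcond Q μ n))) Filter.atTop :=
  let ⟨M, hM⟩ := hf.exists_le_smul_simplexVolume
  MSEfreq_liminf_entropy_bound_general ha Q hQpos hQcol μ hrank M hM

end
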